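/- arXiv:1504.06522 — 5 statements merged into one kernel-verified Lean document; each statement's English description precedes it below -/
import Mathlib

section
/- For all triples (m1,m2,m3) and (m1',m2',m3') of nonnegative integers, S(m1+m1', m2+m2', m3+m3') = S(m1,m2,m3) + S(m1',m2',m3') (equality of subsets of Z^9, the right-hand side being a Minkowski sum). -/
open scoped Pointwise

/-- The set `S(m1,m2,m3)` of lattice points of the polytope `P(λ)` attached to the
dominant integral weight `λ = m1·ω₁ + m2·ω₂ + m3·ω₃` of the simple Lie algebra of
type `B₃`.  Coordinates: `s 0 = s₁, …, s 8 = s₉`. -/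
def SB3 (m1 m2 m3 : ℕ) : Set (Fin 9 → ℕ) :=
  {s |
    s 1 + s 2 + s 3 + s 7 + s 8 ≤ m1 + m2 + m3 ∧
    s 2 + s 3 + s 4 + s 7 + s 8 ≤ m1 + m2 + m3 ∧
    s 3 + s 4 + s 5 + s 7 + s 8 ≤ m1 + m2 + m3 ∧
    s 4 + s 5 + s 6 + s 7 + s 8 ≤ m1 + m2 + m3 ∧
    s 2 + s 4 + s 7 ≤ m2 + m3 ∧
    s 4 + s 6 + s 7 ≤ m2 + m3 ∧
    s 5 + s 6 + s 8 ≤ m1 + m2 ∧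
    s 6 ≤ m2 ∧
    s 7 ≤ m3 ∧
    s 8 ≤ m1 ∧
    s 2 + s 3 + s 4 + s 5 + s 6 + s 7 + s 8 ≤ m1 + 2 * m2 + m3 ∧
    s 0 + s 1 + s 2 + s 3 + s 4 + s 6 + s 8 ≤ m1 + 2 * m2 + m3 ∧
    s 0 + s 2 + s 3 + s 4 + s 5 + s 6 + s 8 ≤ m1 + 2 * m2 + m3 ∧
    s 1 + s 2 + s 3 + s 4 + s 6 + s 7 + s 8 ≤ m1 + 2 * m2 + m3 ∧
    s 0 + s 1 + s 2 + s 3 + s 4 + s 5 + s 6 + 2 * s 8 ≤ 2 * m1 + 2 * m2 + m3 ∧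
    s 1 + s 2 + s 3 + s 4 + s 5 + s 6 + s 7 + 2 * s 8 ≤ 2 * m1 + 2 * m2 + m3 ∧
    s 0 + s 1 + 2 * (s 2 + s 3 + s 4) + s 5 + s 6 + s 7 + 2 * s 8 ≤ 2 * m1 + 3 * m2 + 2 * m3 ∧
    s 1 + 2 * (s 2 + s 3 + s 4) + s 5 + s 6 + 2 * (s 7 + s 8) ≤ 2 * m1 + 3 * m2 + 2 * m3 ∧
    s 2 + s 3 + 2 * s 4 + s 5 + s 6 + 2 * s 7 + s 8 ≤ m1 + 2 * m2 + 2 * m3}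

theorem SB3_add_subset (m1 m2 m3 m1' m2' m3' : ℕ) :
    SB3 m1 m2 m3 + SB3 m1' m2' m3' ⊆ SB3 (m1 + m1') (m2 + m2') (m3 + m3') := by
  rintro _ ⟨s, hs, t, ht, rfl⟩
  simp only [SB3, Set.mem_ofPred_eq, Pi.add_apply] at hs ht ⊢
  omega

theorem SB3_zero : SB3 0 0 0 = 0 := by
  ext s
  simp only [SB3, Set.mem_ofPred_eq, Set.mem_zero, funext_iff, Fin.forall_fin_succ, Pi.zero_apply]
  simp
  omega

/-- It suffices to find a summand `t ≤ s`, the order being spelled out coordinatewise. -/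
theorem SB3_mem_add_of_le {m1 m2 m3 m1' m2' m3' : ℕ} {s : Fin 9 → ℕ} (t : Fin 9 → ℕ)
    (h : (t 0 ≤ s 0 ∧ t 1 ≤ s 1 ∧ t 2 ≤ s 2 ∧ t 3 ≤ s 3 ∧ t 4 ≤ s 4 ∧ t 5 ≤ s 5 ∧ t 6 ≤ s 6 ∧
      t 7 ≤ s 7 ∧ t 8 ≤ s 8) ∧ t ∈ SB3 m1 m2 m3 ∧ s - t ∈ SB3 m1' m2' m3') :
    s ∈ SB3 m1 m2 m3 + SB3 m1' m2' m3' := by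
  obtain ⟨hle, ht, hst⟩ := h
  refine ⟨t, ht, s - t, hst, add_tsub_cancel_of_le fun i => ?_⟩
  fin_cases i <;> simp only [Fin.reduceFinMk, Fin.zero_eta, Fin.mk_one] <;> omega

/-- A point of `S(λ + ω₁)` splits off a point of `S(ω₁)`. -/
theorem SB3_succ_subset_fst (m1 m2 m3 : ℕ) :
    SB3 (m1 + 1) m2 m3 ⊆ SB3 1 0 0 + SB3 m1 m2 m3 := by
  intro s hs
  simp only [SB3, Set.mem_ofPred_eq] at hs
  obtain ⟨t, ht⟩ : ∃ t : Fin 9 → ℕ, t =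
    if s 8 = 0 then
      if s 2 + s 3 + s 4 + s 7 + s 8 = m1 + 1 + m2 + m3 then
        ![0, 0, 0, 1, 0, 0, 0, 0, 0]
      else if s 1 = 0 then
        if s 0 + s 1 + s 2 + s 3 + s 4 + s 6 + s 8 = m1 + 1 + 2 * m2 + m3 then
          ![1, 0, 0, 0, 0, 0, 0, 0, 0]
        else if s 5 = 0 then
          ![0, 0, 0, 0, 0, 0, 0, 0, 0]
        else ![0, 0, 0, 0, 0, 1, 0, 0, 0]
      else if s 5 = 0 then
        ![0, 1, 0, 0, 0, 0, 0, 0, 0]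
      else ![0, 1, 0, 0, 0, 1, 0, 0, 0]
    else ![0, 0, 0, 0, 0, 0, 0, 0, 1] := ⟨_, rfl⟩
  apply SB3_mem_add_of_le t
  split_ifs at ht <;> subst ht <;>
    simp only [SB3, Set.mem_ofPred_eq, Pi.sub_apply, Matrix.cons_val] <;> omega

/-- A point of `S(λ + ω₃)` splits off a point of `S(ω₃)` when `λ` does not involve `ω₁`. -/
theorem SB3_succ_subset_trd (m2 m3 : ℕ) :
    SB3 0 m2 (m3 + 1) ⊆ SB3 0 0 1 + SB3 0 m2 m3 := by
  intro s hs
  simp only [SB3, Set.mem_ofPred_eq] at hs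
  obtain ⟨t, ht⟩ : ∃ t : Fin 9 → ℕ, t =
    if s 7 = 0 then
      if s 1 + s 2 + s 3 + s 7 + s 8 = m2 + m3 + 1 then
        if s 2 + s 4 + s 7 = m2 + m3 + 1 then
          ![0, 0, 1, 0, 0, 0, 0, 0, 0]
        else if s 3 = 0 then
          ![0, 1, 0, 0, 0, 0, 0, 0, 0]
        else ![0, 0, 0, 1, 0, 0, 0, 0, 0]
      else if s 4 = 0 then
        if s 3 = 0 then
          if s 0 = 0 then
            ![0, 0, 0, 0, 0, 0, 0, 0, 0]
          else ![1, 0, 0, 0, 0, 0, 0, 0, 0]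
        else ![0, 0, 0, 1, 0, 0, 0, 0, 0]
      else ![0, 0, 0, 0, 1, 0, 0, 0, 0]
    else if s 0 = 0 then
      ![0, 0, 0, 0, 0, 0, 0, 1, 0]
    else ![1, 0, 0, 0, 0, 0, 0, 1, 0] := ⟨_, rfl⟩
  apply SB3_mem_add_of_le t
  split_ifs at ht <;> subst ht <;>
    simp only [SB3, Set.mem_ofPred_eq, Pi.sub_apply, Matrix.cons_val] <;> omega

set_option maxHeartbeats 1000000 in
/-- A point of `S(λ + ω₂)` splits off a point of `S(ω₂)` when `λ` is a multiple of `ω₂`. -/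
theorem SB3_succ_subset_snd (m2 : ℕ) :
    SB3 0 (m2 + 1) 0 ⊆ SB3 0 1 0 + SB3 0 m2 0 := by
  intro s hs
  simp only [SB3, Set.mem_ofPred_eq] at hs
  obtain ⟨t, ht⟩ : ∃ t : Fin 9 → ℕ, t =
    if s 3 = 0 then
      if s 2 = 0 then
        if s 5 + s 6 + s 8 = m2 + 1 then
          if s 1 = 0 then
            if s 0 = 0 then
              if s 6 = 0 then
                ![0, 0, 0, 0, 0, 1, 0, 0, 0]
              else ![0, 0, 0, 0, 0, 0, 1, 0, 0]
            else if s 6 = 0 then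
              ![1, 0, 0, 0, 0, 1, 0, 0, 0]
            else ![1, 0, 0, 0, 0, 0, 1, 0, 0]
          else if s 3 + s 4 + s 5 + s 7 + s 8 = m2 + 1 then
            ![0, 1, 0, 0, 0, 1, 0, 0, 0]
          else ![0, 1, 0, 0, 0, 0, 1, 0, 0]
        else if s 1 = 0 then
          if s 0 = 0 then
            if s 4 = 0 then
              ![0, 0, 0, 0, 0, 0, 0, 0, 0]
            else ![0, 0, 0, 0, 1, 0, 0, 0, 0]
          else if s 4 = 0 then
            if s 0 ≤ 1 then
              ![1, 0, 0, 0, 0, 0, 0, 0, 0]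
            else ![2, 0, 0, 0, 0, 0, 0, 0, 0]
          else ![1, 0, 0, 0, 1, 0, 0, 0, 0]
        else if s 4 = 0 then
          if s 0 = 0 then
            ![0, 1, 0, 0, 0, 0, 0, 0, 0]
          else ![1, 1, 0, 0, 0, 0, 0, 0, 0]
        else ![0, 1, 0, 0, 1, 0, 0, 0, 0]
      else if s 6 = 0 then
        if s 5 = 0 then
          if s 0 = 0 then
            ![0, 0, 1, 0, 0, 0, 0, 0, 0]
          else ![1, 0, 1, 0, 0, 0, 0, 0, 0]
        else ![0, 0, 1, 0, 0, 1, 0, 0, 0]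
      else ![0, 0, 1, 0, 0, 0, 1, 0, 0]
    else if s 6 = 0 then
      if s 0 = 0 then
        ![0, 0, 0, 1, 0, 0, 0, 0, 0]
      else ![1, 0, 0, 1, 0, 0, 0, 0, 0]
    else ![0, 0, 0, 1, 0, 0, 1, 0, 0] := ⟨_, rfl⟩
  apply SB3_mem_add_of_le t
  split_ifs at ht <;> subst ht <;>
    simp only [SB3, Set.mem_ofPred_eq, Pi.sub_apply, Matrix.cons_val] <;> omega

/-- Every `S(λ)` is the Minkowski sum of copies of the sets of the fundamental weights. -/
theorem SB3_eq_nsmul (m1 m2 m3 : ℕ) :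
    SB3 m1 m2 m3 = m1 • SB3 1 0 0 + m2 • SB3 0 1 0 + m3 • SB3 0 0 1 := by
  induction m1 with
  | succ m1 ih =>
    rw [(SB3_succ_subset_fst m1 m2 m3).antisymm
      (by simpa [add_comm] using SB3_add_subset 1 0 0 m1 m2 m3), ih, succ_nsmul']
    simp only [add_assoc]
  | zero =>
    induction m3 with
    | succ m3 ih =>
      rw [(SB3_succ_subset_trd m2 m3).antisymm
        (by simpa [add_comm] using SB3_add_subset 0 0 1 0 m2 m3), ih, succ_nsmul,
        add_comm, add_assoc]
    | zero =>
      induction m2 with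
      | succ m2 ih =>
        rw [(SB3_succ_subset_snd m2).antisymm
          (by simpa [add_comm] using SB3_add_subset 0 1 0 0 m2 0), ih, succ_nsmul']
        simp only [zero_nsmul, zero_add, add_zero]
      | zero => simp [SB3_zero]

/-- Minkowski-sum property of the `B₃` polytopes:
`S(λ+μ) = S(λ) + S(μ)` for all dominant integral weights `λ, μ`. -/
theorem SB3_add (m1 m2 m3 m1' m2' m3' : ℕ) :
    SB3 (m1 + m1') (m2 + m2') (m3 + m3') = SB3 m1 m2 m3 + SB3 m1' m2' m3' := by
  rw [SB3_eq_nsmul (m1 + m1'), SB3_eq_nsmul m1, SB3_eq_nsmul m1']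
  simp only [add_nsmul]
  ac_rfl
end

section
/- For all nonnegative integers m1,m2,m3, the finite set S(m1,m2,m3) has cardinality (1/720)*(m1+1)*(m2+1)*(m3+1)*(m1+2*m2+m3+4)*(2*m1+2*m2+m3+5)*(m1+m2+m3+3)*(m1+m2+2)*(m2+m3+2)*(2*m2+m3+3); this number is the Weyl dimension of the irreducible highest weight module V(m1*omega1+m2*omega2+m3*omega3) for the simple Lie algebra of type B3. -/
open scoped Pointwise

/-- Parameters `(a, b, k, t, d, y, s, x, p)` enumerating `SB3 m1 m2 m3` through `point`; each
parameter runs over an interval determined by the preceding ones. -/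
def paramFinset (m1 m2 m3 : ℕ) :
    Finset (Σ _ : ℕ, Σ _ : ℕ, Σ _ : ℕ, Σ _ : ℕ, Σ _ : ℕ, Σ _ : ℕ, Σ _ : ℕ, Σ _ : ℕ, ℕ) :=
  (Finset.range (m1 + 1)).sigma fun a => (Finset.range (m3 + 1)).sigma fun b =>
    (Finset.range (m2 + 1)).sigma fun k => (Finset.range (k + b + 1)).sigma fun t =>
    (Finset.range (a + (m2 + b - t) + 1)).sigma fun d =>
    (Finset.range (min a d + (m2 - k) + 1)).sigma fun y =>
    (Finset.range (m2 + b - t - (d - a) - (y - d) + 1)).sigma fun _ =>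
    (Finset.range (d + min t k + 1)).sigma fun x =>
    Finset.range (m3 - b + d + k - max x (min y (min a d)) + 1)

/-- The element of `SB3 m1 m2 m3` with the given parameters. -/
def point (m1 m2 m3 : ℕ) :
    (Σ _ : ℕ, Σ _ : ℕ, Σ _ : ℕ, Σ _ : ℕ, Σ _ : ℕ, Σ _ : ℕ, Σ _ : ℕ, Σ _ : ℕ, ℕ) → Fin 9 → ℕ :=
  fun ⟨a, b, k, t, d, y, s, x, p⟩ =>
    ![p, x, s + (y - d), a + (m2 + b - t) - d - (s + (y - d)), t, y, m2 - k - (y - min a d),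
      m3 - b, m1 - a]

theorem point_mem {m1 m2 m3 : ℕ} {z} (hz : z ∈ paramFinset m1 m2 m3) :
    point m1 m2 m3 z ∈ SB3 m1 m2 m3 := by
  obtain ⟨a, b, k, t, d, y, s, x, p⟩ := z
  simp only [paramFinset, Finset.mem_sigma, Finset.mem_range] at hz
  obtain ⟨ha, hb, hk, ht, hd, hy, hs, hx, hp⟩ := hz
  simp only [SB3, point, Set.mem_ofPred_eq]
  simp only [Fin.isValue, Matrix.cons_val]
  generalize hq : min a d = q at *
  have hqa : q ≤ a := hq ▸ min_le_left a d
  have hqd : q ≤ d := hq ▸ min_le_right a d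
  have hq' : q = a ∨ q = d := by omega
  have hxt : x ≤ d + t := by omega
  have hxk : x ≤ d + k := by omega
  clear hx hq
  generalize hg : m3 - b = g at *
  generalize hf : m1 - a = f
  have hpx : p + x ≤ g + d + k := by omega
  have hpc : p + y ≤ g + d + k ∨ q ≤ y ∧ p + q ≤ g + d + k := by omega
  clear hp
  replace hg : g + b = m3 := by omega
  replace hf : f + a = m1 := by omega
  generalize hj : y - q = j
  have hjy : y ≤ q ∧ j = 0 ∨ y = q + j := by omega
  have hjk : j + k ≤ m2 := by omega
  clear hj hy
  generalize hu : m2 - k - j = u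
  replace hu : u + k + j = m2 := by omega
  generalize hv : s + (y - d) = v
  have hvy : y ≤ d + v := by omega
  have hvw : v + t ≤ m2 + b := by omega
  have hvd : v + t + d ≤ a + m2 + b := by omega
  clear hv hs
  generalize hr : a + (m2 + b - t) - d - v = r
  replace hr : r + v + t + d = a + m2 + b := by omega
  clear hd ha hb hk
  subst hf hg hu
  rcases hq' with rfl | rfl <;> rcases hjy with ⟨hjy, rfl⟩ | rfl <;>
  refine ⟨?_, ?_, ?_, ?_, ?_, ?_, ?_, ?_, ?_, ?_, ?_, ?_, ?_, ?_, ?_, ?_, ?_, ?_, ?_⟩ <;> omega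

theorem point_injOn (m1 m2 m3 : ℕ) :
    Set.InjOn (point m1 m2 m3) (paramFinset m1 m2 m3) := by
  rintro ⟨a, b, k, t, d, y, s, x, p⟩ hz ⟨a', b', k', t', d', y', s', x', p'⟩ hz' h
  simp only [Finset.mem_coe, paramFinset, Finset.mem_sigma, Finset.mem_range] at hz hz'
  obtain ⟨ha, hb, hk, ht, hd, hy, hs, -, -⟩ := hz
  obtain ⟨ha', hb', hk', ht', hd', hy', hs', -, -⟩ := hz'
  simp only [point, Matrix.vecCons_inj] at h
  obtain ⟨rfl, rfl, h2, h3, rfl, rfl, h6, h7, h8, -⟩ := h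
  obtain rfl : a = a' := by omega
  obtain rfl : b = b' := by omega
  have hle : d + (s + (y - d)) ≤ a + (m2 + b - t) := by clear hy' hs' h2 h3 h6 h7 h8; omega
  have hle' : d' + (s' + (y - d')) ≤ a + (m2 + b - t) := by clear hy hs h2 h3 h6 h7 h8; omega
  obtain rfl : d = d' := by clear hs hs' hy hy' h6; omega
  obtain rfl : s = s' := by clear hs hs' hy hy' h6; omega
  obtain rfl : k = k' := by clear hs hs' h2 h3 hle hle'; omega
  rfl

theorem exists_point_eq {m1 m2 m3 : ℕ} {s : Fin 9 → ℕ} (hs : s ∈ SB3 m1 m2 m3) :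
    ∃ z ∈ paramFinset m1 m2 m3, point m1 m2 m3 z = s := by
  obtain ⟨h1, h2, h3, h4, h5, h6, h7, h8, h9, h10, h11, h12, h13, h14, h15, h16, h17, h18,
    h19⟩ := hs
  obtain ⟨g, hg⟩ : ∃ g, g = s 7 := ⟨_, rfl⟩
  obtain ⟨f, hf⟩ : ∃ f, f = s 8 := ⟨_, rfl⟩
  obtain ⟨a, rfl⟩ : ∃ a, m1 = f + a := ⟨m1 - f, by omega⟩
  obtain ⟨b, rfl⟩ : ∃ b, m3 = g + b := ⟨m3 - g, by omega⟩
  obtain ⟨u, rfl⟩ : ∃ u, m2 = s 6 + u := ⟨m2 - s 6, by omega⟩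
  obtain ⟨d, hd⟩ : ∃ d, s 2 + s 3 + s 4 + d = a + s 6 + u + b :=
    ⟨a + s 6 + u + b - (s 2 + s 3 + s 4), by omega⟩
  have hsu : s 5 - min a d ≤ u := by omega
  obtain ⟨k, hk⟩ : ∃ k, k + (s 5 - min a d) = u := ⟨u - (s 5 - min a d), by omega⟩
  refine ⟨⟨a, b, k, s 4, d, s 5, s 2 - (s 5 - d), s 1, s 0⟩, ?_, ?_⟩
  · simp only [paramFinset, Finset.mem_sigma, Finset.mem_range]
    rcases le_total a d with h | h <;> simp only [min_eq_left h, min_eq_right h] at * <;>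
    refine ⟨?_, ?_, ?_, ?_, ?_, ?_, ?_, ?_, ?_⟩ <;> omega
  · funext i
    fin_cases i <;> simp only [point, Fin.isValue, Matrix.cons_val, Fin.mk_one, Fin.zero_eta,
      Fin.reduceFinMk] <;> omega

theorem SB3_ncard_eq_card (m1 m2 m3 : ℕ) :
    (SB3 m1 m2 m3).ncard = (paramFinset m1 m2 m3).card := by
  have h : SB3 m1 m2 m3 = point m1 m2 m3 '' (paramFinset m1 m2 m3) := by
    ext s
    exact ⟨fun hs => exists_point_eq hs, fun ⟨z, hz, hs⟩ => hs ▸ point_mem hz⟩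
  rw [h, (point_injOn m1 m2 m3).ncard_image, Set.ncard_coe_finset]

theorem card_paramFinset (m1 m2 m3 : ℕ) :
    (paramFinset m1 m2 m3).card =
      ∑ a ∈ Finset.range (m1 + 1), ∑ b ∈ Finset.range (m3 + 1), ∑ k ∈ Finset.range (m2 + 1),
        ∑ t ∈ Finset.range (k + b + 1), ∑ d ∈ Finset.range (a + (m2 + b - t) + 1),
          ∑ y ∈ Finset.range (min a d + (m2 - k) + 1),
            (m2 + b - t - (d - a) - (y - d) + 1) * ∑ x ∈ Finset.range (d + min t k + 1),
              (m3 - b + d + k - max x (min y (min a d)) + 1) := by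
  simp only [paramFinset, Finset.card_sigma, Finset.card_range, Finset.sum_const, smul_eq_mul]

/-- The number of `(d, y, s, x, p)` over a fixed `(a, b, k, t)`, where `L = m2 - k`, `w = m2 + b - t`,
`p = m3 - b + k + 1` and `C = (min t k + 1) * (2 * p - min t k)`. -/
def fiberCount (a L w p C : ℚ) : ℚ :=
  ((5 * L + 5 * a + 5) * w ^ 4 + ((20 * a + 20 * p + 30) * L + 20 * a ^ 2 + (20 * p + 50) * a +
    20 * p + 30) * w ^ 3 + (((60 * p + 60) * a + 30 * C + 60 * p + 55) * L + 20 * a ^ 3 + (60 *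
    p + 90) * a ^ 2 + (30 * C + 120 * p + 125) * a + 30 * C + 60 * p + 55) * w ^ 2 + ((60 * p *
    a ^ 2 + (60 * C + 120 * p + 40) * a + 90 * C + 40 * p + 30) * L + 10 * a ^ 4 + (40 * p + 60)
    * a ^ 3 + (30 * C + 180 * p + 120) * a ^ 2 + (120 * C + 180 * p + 100) * a + 90 * C + 40 * p
    + 30) * w - L ^ 5 + (-5 * a - 5 * p - 5) * L ^ 4 + ((-20 * p - 10) * a - 10 * C - 10 * p -
    5) * L ^ 3 + (-30 * p * a ^ 2 + (-30 * C - 30 * p + 5) * a - 30 * C + 5 * p + 5) * L ^ 2 +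
    (30 * p * a ^ 2 + (30 * C + 50 * p + 10) * a + 40 * C + 10 * p + 6) * L + 10 * a ^ 4 + (40 *
    p + 40) * a ^ 3 + (30 * C + 120 * p + 50) * a ^ 2 + (90 * C + 80 * p + 20) * a + 60 * C) /
    120

/-- The sum of `fiberCount` over the `N` smallest values of `t`, all at most `k`. -/
def lowSum (a L W p N : ℚ) : ℚ :=
  ((-30 * a - 30 * L - 30) * N ^ 5 + ((60 * a + 60 * L + 60) * W + 15 * a ^ 2 + (60 * p + 60 * L
    + 135) * a + (60 * L + 60) * p + 120 * L + 120) * N ^ 4 + ((60 * a ^ 2 + (-120 * p + 60) * a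
    + (-120 * L - 120) * p) * W + 40 * a ^ 3 + 150 * a ^ 2 + ((-120 * L - 240) * p + 60 * L ^ 2
    + 60 * L + 140) * a + (-240 * L - 240) * p + 20 * L ^ 3 + 60 * L ^ 2 + 70 * L + 30) * N ^ 3
    + ((-60 * a - 60 * L - 60) * W ^ 3 + (-180 * a ^ 2 + (-180 * L - 540) * a - 360 * L - 360) *
    W ^ 2 + (-120 * a ^ 3 + (-180 * p - 720) * a ^ 2 + (-180 * p - 540 * L - 1320) * a - 720 * L
    - 720) * W - 30 * a ^ 4 + (-120 * p - 240) * a ^ 3 + ((-180 * L - 540) * p - 705) * a ^ 2 +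
    ((-180 * L ^ 2 - 360 * L - 480) * p - 420 * L - 975) * a + (-60 * L ^ 3 - 180 * L ^ 2 - 180
    * L - 60) * p - 480 * L - 480) * N ^ 2 + ((30 * a + 30 * L + 30) * W ^ 4 + (120 * a ^ 2 +
    (120 * p + 120 * L + 360) * a + (120 * L + 120) * p + 240 * L + 240) * W ^ 3 + (120 * a ^ 3
    + (360 * p + 720) * a ^ 2 + ((360 * L + 1080) * p + 540 * L + 1290) * a + (720 * L + 720) *
    p + 690 * L + 690) * W ^ 2 + (60 * a ^ 4 + (240 * p + 480) * a ^ 3 + ((360 * L + 1620) * p +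
    1380) * a ^ 2 + ((1440 * L + 2820) * p + 780 * L + 1800) * a + (1440 * L + 1440) * p + 840 *
    L + 840) * W + 90 * a ^ 4 + (360 * p + 440) * a ^ 3 + ((-180 * L ^ 2 + 360 * L + 1620) * p +
    840) * a ^ 2 + ((-120 * L ^ 3 - 360 * L ^ 2 + 1140 * L + 2220) * p - 30 * L ^ 4 - 60 * L ^ 3
    - 30 * L ^ 2 + 360 * L + 850) * a + (-30 * L ^ 4 - 120 * L ^ 3 - 150 * L ^ 2 + 900 * L +
    960) * p - 6 * L ^ 5 - 30 * L ^ 4 - 50 * L ^ 3 - 30 * L ^ 2 + 356 * L + 360) * N) / 720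

/-- The sum of `fiberCount` over `N` consecutive values of `t`, all larger than `k`. -/
def highSum (a L W p C N : ℚ) : ℚ :=
  ((3 * L + 3 * a + 3) * N ^ 5 + ((-15 * L - 15 * a - 15) * W + (-15 * a - 15 * p - 30) * L - 15
    * a ^ 2 + (-15 * p - 45) * a - 15 * p - 30) * N ^ 4 + ((30 * L + 30 * a + 30) * W ^ 2 + ((60
    * a + 60 * p + 120) * L + 60 * a ^ 2 + (60 * p + 180) * a + 60 * p + 120) * W + ((60 * p +
    90) * a + 30 * C + 90 * p + 105) * L + 20 * a ^ 3 + (60 * p + 120) * a ^ 2 + (30 * C + 150 *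
    p + 205) * a + 30 * C + 90 * p + 105) * N ^ 3 + ((-30 * L - 30 * a - 30) * W ^ 3 + ((-90 * a
    - 90 * p - 180) * L - 90 * a ^ 2 + (-90 * p - 270) * a - 90 * p - 180) * W ^ 2 + (((-180 * p
    - 270) * a - 90 * C - 270 * p - 315) * L - 60 * a ^ 3 + (-180 * p - 360) * a ^ 2 + (-90 * C
    - 450 * p - 615) * a - 90 * C - 270 * p - 315) * W + (-90 * p * a ^ 2 + (-90 * C - 270 * p -
    165) * a - 180 * C - 165 * p - 150) * L - 15 * a ^ 4 + (-60 * p - 120) * a ^ 3 + (-45 * C -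
    360 * p - 330) * a ^ 2 + (-225 * C - 465 * p - 375) * a - 180 * C - 165 * p - 150) * N ^ 2 +
    ((15 * L + 15 * a + 15) * W ^ 4 + ((60 * a + 60 * p + 120) * L + 60 * a ^ 2 + (60 * p + 180)
    * a + 60 * p + 120) * W ^ 3 + (((180 * p + 270) * a + 90 * C + 270 * p + 315) * L + 60 * a ^
    3 + (180 * p + 360) * a ^ 2 + (90 * C + 450 * p + 615) * a + 90 * C + 270 * p + 315) * W ^ 2
    + ((180 * p * a ^ 2 + (180 * C + 540 * p + 330) * a + 360 * C + 330 * p + 300) * L + 30 * a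
    ^ 4 + (120 * p + 240) * a ^ 3 + (90 * C + 720 * p + 660) * a ^ 2 + (450 * C + 930 * p + 750)
    * a + 360 * C + 330 * p + 300) * W - 3 * L ^ 5 + (-15 * a - 15 * p - 15) * L ^ 4 + ((-60 * p
    - 30) * a - 30 * C - 30 * p - 15) * L ^ 3 + (-90 * p * a ^ 2 + (-90 * C - 90 * p + 15) * a -
    90 * C + 15 * p + 15) * L ^ 2 + (180 * p * a ^ 2 + (180 * C + 360 * p + 120) * a + 270 * C +
    120 * p + 90) * L + 45 * a ^ 4 + (180 * p + 220) * a ^ 3 + (135 * C + 660 * p + 375) * a ^ 2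
    + (465 * C + 570 * p + 272) * a + 330 * C + 90 * p + 72) * N) / 360

/-- The sum over the `N` smallest values of `k`, where `g = m3 - b`. -/
def kSum (a b n g N : ℚ) : ℚ :=
  (-2 * N ^ 7 + (10 * n + b + 10 * a - 5 * g + 13) * N ^ 6 + (-12 * n ^ 2 + (12 * b - 24 * a +
    24 * g - 18) * n + 12 * b ^ 2 + (12 * a - 6 * g + 27) * b + 3 * a ^ 2 + (24 * g - 3) * a +
    33 * g + 7) * N ^ 5 + (-10 * n ^ 3 + (-60 * b - 30 * a - 30 * g - 90) * n ^ 2 + (-60 * b ^ 2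
    + (-120 * a + 60 * g - 210) * b - 75 * a ^ 2 + (-60 * g - 225) * a - 60 * g - 220) * n - 15
    * b ^ 3 + (-60 * a + 45 * g - 90) * b ^ 2 + (-60 * a ^ 2 + (60 * g - 210) * a + 135 * g -
    170) * b - 20 * a ^ 3 - 135 * a ^ 2 + (-30 * g - 255) * a - 5 * g - 155) * N ^ 4 + (10 * n ^
    4 + (20 * b + 40 * a - 20 * g + 60) * n ^ 3 + ((60 * a - 180 * g) * b + 120 * a ^ 2 + (-60 *
    g + 240) * a - 180 * g + 110) * n ^ 2 + (-20 * b ^ 3 + (-180 * g - 120) * b ^ 2 + (60 * a ^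
    2 - 360 * g * a - 720 * g - 240) * b + 40 * a ^ 3 + (-120 * g + 270) * a ^ 2 + (-420 * g +
    310) * a - 460 * g + 30) * n - 10 * b ^ 4 + (-20 * a - 40 * g - 70) * b ^ 3 + (-30 * a ^ 2 +
    (-180 * g - 150) * a - 330 * g - 230) * b ^ 2 + ((-120 * g - 30) * a ^ 2 + (-660 * g - 250)
    * a - 680 * g - 305) * b - 10 * a ^ 4 - 40 * g * a ^ 3 + (-240 * g + 85) * a ^ 2 + (-500 * g
    + 45) * a - 345 * g - 53) * N ^ 3 + (12 * n ^ 5 + (45 * b + 60 * a + 45 * g + 135) * n ^ 4 +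
    (60 * b ^ 2 + (180 * a + 120 * g + 390) * b + 60 * a ^ 2 + (180 * g + 480) * a + 330 * g +
    580) * n ^ 3 + (30 * b ^ 3 + (180 * a + 90 * g + 360) * b ^ 2 + (270 * a ^ 2 + (360 * g +
    1170) * a + 630 * g + 1245) * b + 60 * a ^ 3 + (270 * g + 540) * a ^ 2 + (990 * g + 1530) *
    a + 885 * g + 1215) * n ^ 2 + ((60 * a + 90) * b ^ 3 + (270 * a ^ 2 + (180 * g + 810) * a +
    270 * g + 720) * b ^ 2 + (120 * a ^ 3 + (180 * g + 1080) * a ^ 2 + (1080 * g + 2460) * a +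
    990 * g + 1710) * b + 30 * a ^ 4 + (120 * g + 300) * a ^ 3 + (810 * g + 1245) * a ^ 2 +
    (1650 * g + 2145) * a + 990 * g + 1248) * n - 3 * b ^ 5 + (-15 * g - 15) * b ^ 4 + (60 * a ^
    2 + 120 * a - 30 * g + 60) * b ^ 3 + (60 * a ^ 3 + 450 * a ^ 2 + (180 * g + 810) * a + 150 *
    g + 465) * b ^ 2 + (180 * a ^ 3 + (180 * g + 990) * a ^ 2 + (660 * g + 1620) * a + 435 * g +
    847) * b + 30 * a ^ 4 + (120 * g + 260) * a ^ 3 + (540 * g + 825) * a ^ 2 + (810 * g + 1085)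
    * a + 370 * g + 502) * N ^ 2 + ((24 * b + 12) * n ^ 5 + (60 * b ^ 2 + (120 * a + 90 * g +
    285) * b + 60 * a + 45 * g + 125) * n ^ 4 + (60 * b ^ 3 + (240 * a + 180 * g + 540) * b ^ 2
    + (120 * a ^ 2 + (360 * g + 1020) * a + 720 * g + 1270) * b + 60 * a ^ 2 + (180 * g + 440) *
    a + 350 * g + 510) * n ^ 3 + (30 * b ^ 4 + (180 * a + 120 * g + 390) * b ^ 3 + (180 * a ^ 2
    + (540 * g + 1440) * a + 990 * g + 1710) * b ^ 2 + (120 * a ^ 3 + (540 * g + 990) * a ^ 2 +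
    (2160 * g + 3210) * a + 2220 * g + 2745) * b + 60 * a ^ 3 + (270 * g + 420) * a ^ 2 + (1050
    * g + 1260) * a + 1035 * g + 1027) * n ^ 2 + (6 * b ^ 5 + (60 * a + 30 * g + 120) * b ^ 4 +
    (120 * a ^ 2 + (240 * g + 720) * a + 420 * g + 800) * b ^ 3 + (120 * a ^ 3 + (540 * g + 990)
    * a ^ 2 + (1980 * g + 2910) * a + 1860 * g + 2340) * b ^ 2 + (60 * a ^ 4 + (240 * g + 600) *
    a ^ 3 + (1980 * g + 2340) * a ^ 2 + (4380 * g + 4500) * a + 3090 * g + 2928) * b + 30 * a ^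
    4 + (120 * g + 260) * a ^ 3 + (930 * g + 900) * a ^ 2 + (2010 * g + 1634) * a + 1366 * g +
    1026) * n + (6 * a + 9) * b ^ 5 + (30 * a ^ 2 + (30 * g + 120) * a + 45 * g + 115) * b ^ 4 +
    (40 * a ^ 3 + (120 * g + 300) * a ^ 2 + (420 * g + 730) * a + 370 * g + 535) * b ^ 3 + (30 *
    a ^ 4 + (120 * g + 300) * a ^ 3 + (900 * g + 1140) * a ^ 2 + (1830 * g + 1980) * a + 1185 *
    g + 1193) * b ^ 2 + (90 * a ^ 4 + (360 * g + 620) * a ^ 3 + (1800 * g + 1710) * a ^ 2 +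
    (2940 * g + 2372) * a + 1616 * g + 1244) * b + 40 * a ^ 4 + (160 * g + 240) * a ^ 3 + (780 *
    g + 602) * a ^ 2 + (1256 * g + 798) * a + 672 * g + 408) * N) / 720

/-- The sum over all `k` and the `N` smallest values of `b`. -/
def abSum (a n m3 N : ℚ) : ℚ :=
  ((-2 * n ^ 2 + (-4 * a - 6) * n - 4 * a - 4) * N ^ 6 + (-12 * n ^ 3 + (3 * m3 - 36 * a - 51) *
    n ^ 2 + ((6 * a + 9) * m3 - 18 * a ^ 2 - 84 * a - 69) * n + (6 * a + 6) * m3 - 18 * a ^ 2 -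
    48 * a - 30) * N ^ 5 + (-20 * n ^ 4 + (20 * m3 - 80 * a - 100) * n ^ 3 + ((60 * a + 90) * m3
    - 90 * a ^ 2 - 270 * a - 180) * n ^ 2 + ((30 * a ^ 2 + 150 * a + 130) * m3 - 20 * a ^ 3 -
    180 * a ^ 2 - 300 * a - 140) * n + (30 * a ^ 2 + 90 * a + 60) * m3 - 20 * a ^ 3 - 90 * a ^ 2
    - 110 * a - 40) * N ^ 4 + (-4 * n ^ 5 + (45 * m3 - 20 * a + 15) * n ^ 4 + ((180 * a + 270) *
    m3 - 60 * a ^ 2 + 40 * a + 170) * n ^ 3 + ((180 * a ^ 2 + 720 * a + 600) * m3 - 20 * a ^ 3 -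
    30 * a ^ 2 + 370 * a + 420) * n ^ 2 + ((40 * a ^ 3 + 420 * a ^ 2 + 950 * a + 585) * m3 + 10
    * a ^ 4 + 20 * a ^ 3 + 170 * a ^ 2 + 570 * a + 419) * n + (40 * a ^ 3 + 240 * a ^ 2 + 410 *
    a + 210) * m3 + 10 * a ^ 4 + 40 * a ^ 3 + 140 * a ^ 2 + 260 * a + 150) * N ^ 3 + (14 * n ^ 6
    + (42 * m3 + 84 * a + 168) * n ^ 5 + ((210 * a + 315) * m3 + 120 * a ^ 2 + 750 * a + 775) *
    n ^ 4 + ((300 * a ^ 2 + 1140 * a + 940) * m3 + 80 * a ^ 3 + 900 * a ^ 2 + 2520 * a + 1810) *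
    n ^ 3 + ((120 * a ^ 3 + 1080 * a ^ 2 + 2310 * a + 1395) * m3 + 30 * a ^ 4 + 420 * a ^ 3 +
    2190 * a ^ 2 + 4050 * a + 2293) * n ^ 2 + ((240 * a ^ 3 + 1290 * a ^ 2 + 2070 * a + 1028) *
    m3 + 60 * a ^ 4 + 600 * a ^ 3 + 2190 * a ^ 2 + 3150 * a + 1508) * n + (120 * a ^ 3 + 510 * a
    ^ 2 + 690 * a + 300) * m3 + 30 * a ^ 4 + 260 * a ^ 3 + 780 * a ^ 2 + 954 * a + 404) * N ^ 2
    + (8 * n ^ 7 + (14 * m3 + 56 * a + 98) * n ^ 6 + ((84 * a + 126) * m3 + 108 * a ^ 2 + 528 *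
    a + 498) * n ^ 5 + ((150 * a ^ 2 + 570 * a + 470) * m3 + 80 * a ^ 3 + 810 * a ^ 2 + 2030 * a
    + 1370) * n ^ 4 + ((80 * a ^ 3 + 720 * a ^ 2 + 1540 * a + 930) * m3 + 20 * a ^ 4 + 440 * a ^
    3 + 2320 * a ^ 2 + 4080 * a + 2214) * n ^ 3 + ((240 * a ^ 3 + 1290 * a ^ 2 + 2070 * a +
    1028) * m3 + 60 * a ^ 4 + 840 * a ^ 3 + 3210 * a ^ 2 + 4530 * a + 2108) * n ^ 2 + ((240 * a
    ^ 3 + 1020 * a ^ 2 + 1380 * a + 600) * m3 + 60 * a ^ 4 + 680 * a ^ 3 + 2160 * a ^ 2 + 2636 *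
    a + 1096) * n + (80 * a ^ 3 + 300 * a ^ 2 + 364 * a + 144) * m3 + 20 * a ^ 4 + 200 * a ^ 3 +
    568 * a ^ 2 + 628 * a + 240) * N) / 720

theorem sum_lowSum (a L W p : ℚ) (N : ℕ) :
    ∑ t ∈ Finset.range N, fiberCount a L (W - t) p ((t + 1) * (2 * p - t)) =
      lowSum a L W p N := by
  refine Finset.sum_range_induction _ (fun N : ℕ => lowSum a L W p N) ?_ _ fun t _ => ?_
  · simp [lowSum]
  · simp only [lowSum, fiberCount, Nat.cast_add, Nat.cast_one]
    ring

theorem sum_highSum (a L W p C : ℚ) (N : ℕ) :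
    ∑ i ∈ Finset.range N, fiberCount a L (W - i) p C = highSum a L W p C N := by
  refine Finset.sum_range_induction _ (fun N : ℕ => highSum a L W p C N) ?_ _ fun t _ => ?_
  · simp [highSum]
  · simp only [highSum, fiberCount, Nat.cast_add, Nat.cast_one]
    ring

theorem sum_kSum (a b n g : ℚ) (N : ℕ) :
    ∑ k ∈ Finset.range N, (lowSum a (n - k) (n + b) (g + k + 1) (k + 1) +
      highSum a (n - k) (n + b - k - 1) (g + k + 1) ((k + 1) * (2 * (g + k + 1) - k)) b) =
      kSum a b n g N := by
  refine Finset.sum_range_induction _ (fun N : ℕ => kSum a b n g N) ?_ _ fun t _ => ?_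
  · simp [kSum]
  · simp only [lowSum, highSum, kSum, Nat.cast_add, Nat.cast_one]
    ring

theorem sum_abSum (a n m3 : ℚ) (N : ℕ) :
    ∑ b ∈ Finset.range N, kSum a b n (m3 - b) (n + 1) = abSum a n m3 N := by
  refine Finset.sum_range_induction _ (fun N : ℕ => abSum a n m3 N) ?_ _ fun t _ => ?_
  · simp [abSum]
  · simp only [abSum, kSum, Nat.cast_add, Nat.cast_one]
    ring

theorem sum_weylDim (n m3 : ℚ) (N : ℕ) :
    ∑ a ∈ Finset.range N, abSum a n m3 (m3 + 1) =
      N * (n + 1) * (m3 + 1) * (N + 2 * n + m3 + 3) * (2 * N + 2 * n + m3 + 3) *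
        (N + n + m3 + 2) * (N + n + 1) * (n + m3 + 2) * (2 * n + m3 + 3) / 720 := by
  refine Finset.sum_range_induction _ (fun N : ℕ => (N : ℚ) * (n + 1) * (m3 + 1) *
    (N + 2 * n + m3 + 3) * (2 * N + 2 * n + m3 + 3) * (N + n + m3 + 2) * (N + n + 1) *
    (n + m3 + 2) * (2 * n + m3 + 3) / 720) ?_ _ fun t _ => ?_
  · simp
  · simp only [abSum, Nat.cast_add, Nat.cast_one]
    ring

theorem sum_range_max {c N : ℕ} (h : c ≤ N) :
    ∑ x ∈ Finset.range N, ((max x c : ℕ) : ℚ) = ((N : ℚ) * (N - 1) + c * (c + 1)) / 2 := by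
  induction N, h using Nat.le_induction with
  | base =>
    rw [Finset.sum_congr rfl fun x hx => by rw [max_eq_right (Finset.mem_range.1 hx).le]]
    simp only [Finset.sum_const, Finset.card_range, nsmul_eq_mul]
    ring
  | succ N h ih =>
    rw [Finset.sum_range_succ, ih, max_eq_left h]
    push_cast
    ring

theorem sum_range_sub_max {c N K : ℕ} (h : c ≤ N) (hN : N ≤ K + 1) (hc : c ≤ K) :
    ∑ x ∈ Finset.range N, ((K - max x c + 1 : ℕ) : ℚ) =
      N * (K + 1) - ((N : ℚ) * (N - 1) + c * (c + 1)) / 2 := by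
  rw [← sum_range_max h, Finset.sum_congr rfl fun x hx => by
    rw [Nat.cast_add, Nat.cast_sub (by have := Finset.mem_range.1 hx; omega)]]
  simp only [Finset.sum_add_distrib, Finset.sum_sub_distrib, Finset.sum_const, Finset.card_range,
    nsmul_eq_mul]
  push_cast
  ring

theorem sum_range_mul_min (q L : ℕ) (v A : ℚ) (f : ℕ → ℚ) (hf : ∀ y < q, f y = A) :
    ∑ y ∈ Finset.range (q + L + 1), f y * ((v - (min y q : ℕ) * ((min y q : ℕ) + 1)) / 2) =
      A * (q * v - (q - 1) * q * (q + 1) / 3) / 2 +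
        (∑ j ∈ Finset.range (L + 1), f (q + j)) * ((v - q * (q + 1)) / 2) := by
  rw [add_assoc, Finset.sum_range_add, Finset.sum_mul]
  congr 1
  · rw [Finset.sum_congr rfl fun y hy => by
      rw [hf y (Finset.mem_range.1 hy), min_eq_left (Finset.mem_range.1 hy).le]]
    refine Finset.sum_range_induction _
      (fun q : ℕ => A * (q * v - (q - 1) * q * (q + 1) / 3) / 2) ?_ _ fun y _ => ?_
    · simp
    · push_cast
      ring
  · exact Finset.sum_congr rfl fun j _ => by rw [min_eq_right (Nat.le_add_right q j)]

/-- The contribution of a fixed `d` to `fiberCount`. Here `A` and `J` are the number of values of `s`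
for one `y < q`, respectively for all `y ≥ q`, where `q = min a d`. -/
def dTerm (p C q A J d : ℚ) : ℚ :=
  A * (q * (d ^ 2 + (2 * p + 1) * d + C) - (q - 1) * q * (q + 1) / 3) / 2 +
    J * ((d ^ 2 + (2 * p + 1) * d + C - q * (q + 1)) / 2)

theorem sum_dTerm_le (L w p C : ℚ) (N : ℕ) :
    ∑ d ∈ Finset.range N, dTerm p C d (w + 1) ((L + 1) * (w + 1) - (L + 1) * L / 2) d =
      ((w + 1) * N ^ 4 + ((4 * w + 4) * p) * N ^ 3 + ((-3 * L ^ 2 + (6 * w + 3) * L) * p + (3 *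
      w + 3) * C - w - 1) * N ^ 2 + ((3 * L ^ 2 + (-6 * w - 3) * L - 4 * w - 4) * p + (-3 * L ^
      2 + (6 * w + 3) * L + 3 * w + 3) * C) * N) / 12 := by
  induction N with
  | zero => simp
  | succ N ih =>
    rw [Finset.sum_range_succ, ih]
    simp only [dTerm]
    push_cast
    ring

theorem sum_dTerm_mid (a L w p C : ℚ) (N : ℕ) :
    ∑ e ∈ Finset.range N, dTerm p C a (w - e)
      ((L + 1) * (w + 1) - ((L + 1) * L + (e + 1) * (e + 2)) / 2) (a + 1 + e) =
      (-6 * N ^ 5 + (-30 * a - 15 * p - 30) * N ^ 4 + (-10 * L ^ 2 + (20 * w + 10) * L - 40 * a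
      ^ 2 + (20 * w - 60 * p - 80) * a + 20 * w - 10 * C - 50 * p - 30) * N ^ 3 + ((-30 * a - 30
      * p - 30) * L ^ 2 + ((60 * w + 30) * a + (60 * p + 60) * w + 30 * p + 30) * L - 20 * a ^ 3
      + (60 * w - 60 * p - 30) * a ^ 2 + ((60 * p + 120) * w - 30 * C - 60 * p + 20) * a + (60 *
      p + 60) * w - 30 * C + 15 * p + 30) * N ^ 2 + (((-60 * p - 30) * a - 30 * C - 30 * p - 20)
      * L ^ 2 + (((120 * p + 60) * w + 60 * p + 30) * a + (60 * C + 60 * p + 40) * w + 30 * C +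
      30 * p + 20) * L + (40 * w + 20) * a ^ 3 + ((120 * p + 120) * w + 60 * p + 70) * a ^ 2 +
      ((60 * C + 180 * p + 120) * w + 30 * C + 120 * p + 90) * a + (60 * C + 60 * p + 40) * w +
      40 * C + 50 * p + 36) * N) / 120 := by
  induction N with
  | zero => simp
  | succ N ih =>
    rw [Finset.sum_range_succ, ih]
    simp only [dTerm]
    push_cast
    ring

theorem sum_dTerm_high (a L i p C : ℚ) (N : ℕ) :
    ∑ e ∈ Finset.range N, dTerm p C a (i - e) ((L + 1) * (i - e)) (a + 1 + L + e) =
      ((-3 * L - 3 * a - 3) * N ^ 4 + (-8 * L ^ 2 + (-16 * a + 4 * i - 8 * p - 14) * L - 8 * a ^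
      2 + (4 * i - 8 * p - 14) * a + 4 * i - 8 * p - 6) * N ^ 3 + (-6 * L ^ 3 + (-18 * a + 12 *
      i - 12 * p - 12) * L ^ 2 + (-12 * a ^ 2 + (24 * i - 24 * p - 18) * a + (12 * p + 24) * i -
      12 * p - 6 * C - 3) * L - 4 * a ^ 3 + (12 * i - 12 * p - 6) * a ^ 2 + ((12 * p + 24) * i -
      12 * p - 6 * C + 1) * a + (12 * p + 12) * i - 6 * C + 3) * N ^ 2 + ((12 * i + 6) * L ^ 3 +
      ((36 * i + 18) * a + (24 * p + 36) * i + 12 * p + 20) * L ^ 2 + ((24 * i + 12) * a ^ 2 +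
      ((48 * p + 60) * i + 24 * p + 34) * a + (36 * p + 12 * C + 32) * i + 20 * p + 6 * C + 20)
      * L + (8 * i + 4) * a ^ 3 + ((24 * p + 24) * i + 12 * p + 14) * a ^ 2 + ((36 * p + 12 * C
      + 24) * i + 20 * p + 6 * C + 16) * a + (12 * p + 12 * C + 8) * i + 8 * p + 6 * C + 6) * N)
      / 24 := by
  induction N with
  | zero => simp
  | succ N ih =>
    rw [Finset.sum_range_succ, ih]
    simp only [dTerm]
    push_cast
    ring

theorem sum_x {g k μ c d : ℕ} (hμ : μ ≤ k) (hc : c ≤ d) :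
    ∑ x ∈ Finset.range (d + μ + 1), ((g + d + k - max x c + 1 : ℕ) : ℚ) =
      ((d : ℚ) ^ 2 + (2 * (g + k + 1) + 1) * d + (μ + 1) * (2 * (g + k + 1) - μ) -
        c * (c + 1)) / 2 := by
  rw [sum_range_sub_max (by omega) (by omega) (by omega)]
  push_cast
  ring

theorem sum_y {a d L w g k μ : ℕ} (A J : ℚ) (hμ : μ ≤ k)
    (hA : ∀ y < min a d, ((w - (d - a) - (y - d) + 1 : ℕ) : ℚ) = A)
    (hJ : ∑ j ∈ Finset.range (L + 1), ((w - (d - a) - (min a d + j - d) + 1 : ℕ) : ℚ) = J) :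
    ∑ y ∈ Finset.range (min a d + L + 1), ((w - (d - a) - (y - d) + 1 : ℕ) : ℚ) *
      ∑ x ∈ Finset.range (d + μ + 1), ((g + d + k - max x (min y (min a d)) + 1 : ℕ) : ℚ) =
      dTerm (g + k + 1) ((μ + 1) * (2 * (g + k + 1) - μ)) (min a d : ℕ) A J d := by
  rw [Finset.sum_congr rfl fun y _ => by
    rw [sum_x hμ ((min_le_right _ _).trans (min_le_right a d))]]
  rw [sum_range_mul_min _ _ _ A _ hA, hJ, dTerm]

theorem sum_d (a L i g : ℕ) {k μ : ℕ} (hμ : μ ≤ k) :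
    ∑ d ∈ Finset.range (a + (L + i) + 1), ∑ y ∈ Finset.range (min a d + L + 1),
      ((L + i - (d - a) - (y - d) + 1 : ℕ) : ℚ) *
      ∑ x ∈ Finset.range (d + μ + 1), ((g + d + k - max x (min y (min a d)) + 1 : ℕ) : ℚ) =
      fiberCount a L (L + i) (g + k + 1) ((μ + 1) * (2 * (g + k + 1) - μ)) := by
  rw [show a + (L + i) + 1 = a + 1 + L + i by ring, Finset.sum_range_add, Finset.sum_range_add]
  have hlow : ∀ d ∈ Finset.range (a + 1), ∑ y ∈ Finset.range (min a d + L + 1),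
      ((L + i - (d - a) - (y - d) + 1 : ℕ) : ℚ) *
      ∑ x ∈ Finset.range (d + μ + 1), ((g + d + k - max x (min y (min a d)) + 1 : ℕ) : ℚ) =
      dTerm (g + k + 1) ((μ + 1) * (2 * (g + k + 1) - μ)) d ((L + i : ℚ) + 1)
        ((L + 1) * ((L + i : ℚ) + 1) - (L + 1) * L / 2) d := by
    intro d hd
    have hd : d ≤ a := by simpa [Nat.lt_succ_iff] using hd
    rw [sum_y ((L + i : ℚ) + 1) ((L + 1) * ((L + i : ℚ) + 1) - (L + 1) * L / 2) hμ,
      min_eq_right hd]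
    · intro y hy
      rw [show L + i - (d - a) - (y - d) + 1 = L + i + 1 by omega]
      push_cast
      rfl
    · rw [Finset.sum_congr rfl fun j _ => by
        rw [show L + i - (d - a) - (min a d + j - d) + 1 = L + i - max j 0 + 1 by omega],
        sum_range_sub_max (by omega) (by omega) (by omega)]
      push_cast
      ring
  have hmid : ∀ e ∈ Finset.range L, ∑ y ∈ Finset.range (min a (a + 1 + e) + L + 1),
      ((L + i - (a + 1 + e - a) - (y - (a + 1 + e)) + 1 : ℕ) : ℚ) *
      ∑ x ∈ Finset.range (a + 1 + e + μ + 1),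
        ((g + (a + 1 + e) + k - max x (min y (min a (a + 1 + e))) + 1 : ℕ) : ℚ) =
      dTerm (g + k + 1) ((μ + 1) * (2 * (g + k + 1) - μ)) a ((L + i : ℚ) - e)
        ((L + 1) * ((L + i : ℚ) + 1) - ((L + 1) * L + (e + 1) * (e + 2)) / 2) (a + 1 + e) := by
    intro e he
    have he := Finset.mem_range.1 he
    rw [sum_y ((L + i : ℚ) - e)
      ((L + 1) * ((L + i : ℚ) + 1) - ((L + 1) * L + (e + 1) * (e + 2)) / 2) hμ,
      min_eq_left (by omega)]
    · push_cast
      rfl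
    · intro y hy
      rw [show L + i - (a + 1 + e - a) - (y - (a + 1 + e)) + 1 = L + i - e by omega,
        Nat.cast_sub (by omega)]
      push_cast
      rfl
    · rw [Finset.sum_congr rfl fun j _ => by
        rw [show L + i - (a + 1 + e - a) - (min a (a + 1 + e) + j - (a + 1 + e)) + 1 =
          L + i - max j (e + 1) + 1 by omega],
        sum_range_sub_max (by omega) (by omega) (by omega)]
      push_cast
      ring
  have hhigh : ∀ e ∈ Finset.range i, ∑ y ∈ Finset.range (min a (a + 1 + L + e) + L + 1),
      ((L + i - (a + 1 + L + e - a) - (y - (a + 1 + L + e)) + 1 : ℕ) : ℚ) *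
      ∑ x ∈ Finset.range (a + 1 + L + e + μ + 1),
        ((g + (a + 1 + L + e) + k - max x (min y (min a (a + 1 + L + e))) + 1 : ℕ) : ℚ) =
      dTerm (g + k + 1) ((μ + 1) * (2 * (g + k + 1) - μ)) a ((i : ℚ) - e)
        ((L + 1) * ((i : ℚ) - e)) (a + 1 + L + e) := by
    intro e he
    have he := Finset.mem_range.1 he
    have hcast : ∀ y ≤ a + L,
        ((L + i - (a + 1 + L + e - a) - (y - (a + 1 + L + e)) + 1 : ℕ) : ℚ) = i - e := by
      intro y hy
      rw [show L + i - (a + 1 + L + e - a) - (y - (a + 1 + L + e)) + 1 = i - e by omega,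
        Nat.cast_sub (by omega)]
    rw [sum_y ((i : ℚ) - e) ((L + 1) * ((i : ℚ) - e)) hμ, min_eq_left (by omega)]
    · push_cast
      rfl
    · exact fun y hy => hcast y (by omega)
    · rw [Finset.sum_congr rfl fun j hj => hcast _ (by have := Finset.mem_range.1 hj; omega)]
      simp only [Finset.sum_const, Finset.card_range, nsmul_eq_mul, Nat.cast_add, Nat.cast_one]
  rw [Finset.sum_congr rfl hlow, Finset.sum_congr rfl hmid, Finset.sum_congr rfl hhigh,
    sum_dTerm_le, sum_dTerm_mid, sum_dTerm_high]
  simp only [fiberCount]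
  push_cast
  ring

theorem sum_t (a b n g : ℕ) {k : ℕ} (hk : k ≤ n) :
    ∑ t ∈ Finset.range (k + b + 1), ∑ d ∈ Finset.range (a + (n + b - t) + 1),
      ∑ y ∈ Finset.range (min a d + (n - k) + 1),
        ((n + b - t - (d - a) - (y - d) + 1 : ℕ) : ℚ) *
        ∑ x ∈ Finset.range (d + min t k + 1),
          ((g + d + k - max x (min y (min a d)) + 1 : ℕ) : ℚ) =
      lowSum a (n - k) (n + b) (g + k + 1) (k + 1) +
        highSum a (n - k) (n + b - k - 1) (g + k + 1) ((k + 1) * (2 * (g + k + 1) - k)) b := by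
  obtain ⟨L, rfl⟩ := Nat.exists_eq_add_of_le hk
  rw [show k + b + 1 = k + 1 + b by ring, Finset.sum_range_add]
  congr 1
  · have h := sum_lowSum a L (k + L + b) (g + k + 1) (k + 1)
    push_cast at h ⊢
    rw [add_sub_cancel_left, ← h]
    refine Finset.sum_congr rfl fun t ht => ?_
    have ht := Finset.mem_range.1 ht
    obtain ⟨i, hi⟩ : ∃ i, k + b = t + i := ⟨k + b - t, by omega⟩
    rw [min_eq_left (by omega), show k + L + b - t = L + i by omega, Nat.add_sub_cancel_left]
    have := sum_d a L i g (show t ≤ k by omega)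
    push_cast at this
    rw [this]
    congr 1
    have hi : (k : ℚ) + b = t + i := by exact_mod_cast hi
    linear_combination -hi
  · rw [Nat.cast_add, add_sub_cancel_left, ← sum_highSum]
    refine Finset.sum_congr rfl fun t ht => ?_
    have ht := Finset.mem_range.1 ht
    obtain ⟨i, hi⟩ : ∃ i, b = t + 1 + i := ⟨b - t - 1, by omega⟩
    rw [min_eq_right (by omega), show k + L + b - (k + 1 + t) = L + i by omega,
      Nat.add_sub_cancel_left, sum_d a L i g le_rfl]
    congr 1
    have hi : (b : ℚ) = t + 1 + i := by exact_mod_cast hi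
    linear_combination -hi

theorem card_paramFinset_eq (m1 m2 m3 : ℕ) :
    ((paramFinset m1 m2 m3).card : ℚ) =
      ∑ a ∈ Finset.range (m1 + 1), abSum a m2 m3 (m3 + 1) := by
  rw [card_paramFinset, Nat.cast_sum]
  refine Finset.sum_congr rfl fun a _ => ?_
  have h := sum_abSum a m2 m3 (m3 + 1)
  rw [Nat.cast_add, Nat.cast_one] at h
  rw [← h, Nat.cast_sum]
  refine Finset.sum_congr rfl fun b hb => ?_
  have hb : b ≤ m3 := by simpa [Nat.lt_succ_iff] using hb
  have h := sum_kSum a b m2 (m3 - b) (m2 + 1)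
  rw [Nat.cast_add, Nat.cast_one] at h
  rw [← h, Nat.cast_sum]
  refine Finset.sum_congr rfl fun k hk => ?_
  have hk : k ≤ m2 := by simpa [Nat.lt_succ_iff] using hk
  rw [← Nat.cast_sub hb, ← sum_t a b m2 (m3 - b) hk]
  simp only [Nat.cast_sum, Nat.cast_mul]

/-- the number of lattice points of `P(λ)` equals the Weyl dimension of
the irreducible `B₃`-module `V(m1·ω₁ + m2·ω₂ + m3·ω₃)`. -/
theorem SB3_card (m1 m2 m3 : ℕ) :
    720 * (SB3 m1 m2 m3).ncard =
      (m1 + 1) * (m2 + 1) * (m3 + 1) * (m1 + 2 * m2 + m3 + 4) *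
        (2 * m1 + 2 * m2 + m3 + 5) * (m1 + m2 + m3 + 3) * (m1 + m2 + 2) *
        (m2 + m3 + 2) * (2 * m2 + m3 + 3) := by
  have h := card_paramFinset_eq m1 m2 m3
  rw [sum_weylDim, ← SB3_ncard_eq_card] at h
  have h' : (720 : ℚ) * (SB3 m1 m2 m3).ncard =
      (m1 + 1) * (m2 + 1) * (m3 + 1) * (m1 + 2 * m2 + m3 + 4) *
        (2 * m1 + 2 * m2 + m3 + 5) * (m1 + m2 + m3 + 3) * (m1 + m2 + 2) *
        (m2 + m3 + 2) * (2 * m2 + m3 + 3) := by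
    rw [h]
    push_cast
    ring
  exact_mod_cast h'
end

section
/- For all nonnegative integers m1,m2,m3 and every integer k >= 1, S(k*m1, k*m2, k*m3) equals the k-fold Minkowski sum S(m1,m2,m3)+...+S(m1,m2,m3) (k summands). In particular the polytope P(lambda) is a normal lattice polytope: every lattice point of the dilate k*P(lambda) is a sum of k lattice points of P(lambda). -/
open scoped Pointwise

/-- The defining inequalities are linear in the weight, so `SB3` is superadditive. -/
theorem SB3_add_subset_s2 (a b c a' b' c' : ℕ) :
    SB3 a b c + SB3 a' b' c' ⊆ SB3 (a + a') (b + b') (c + c') := by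
  rintro _ ⟨s, hs, t, ht, rfl⟩
  simp only [SB3, Set.mem_ofPred_eq, Pi.add_apply] at hs ht ⊢
  refine ⟨?_, ?_, ?_, ?_, ?_, ?_, ?_, ?_, ?_, ?_, ?_, ?_, ?_, ?_, ?_, ?_, ?_, ?_, ?_⟩ <;> omega

/-- To split `s` along a summand `t`, it suffices that `t ≤ s` and that `s - t` lies in the
other summand. -/
theorem mem_add_of_le_of_sub_mem {A B : Set (Fin 9 → ℕ)} {s : Fin 9 → ℕ} (t : Fin 9 → ℕ)
    (ht : t ∈ A) (hle : t ≤ s) (hsub : s - t ∈ B) : s ∈ A + B :=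
  ⟨t, ht, s - t, hsub, add_tsub_cancel_of_le hle⟩

/-- A lattice point of weight `λ + ω₁` splits off one of weight `ω₁`. -/
theorem SB3_succ_left_subset (a b c : ℕ) : SB3 (a + 1) b c ⊆ SB3 1 0 0 + SB3 a b c := by
  intro s hs
  have split (t : Fin 9 → ℕ) :=
    mem_add_of_le_of_sub_mem (A := SB3 1 0 0) (B := SB3 a b c) (s := s) t
  simp only [SB3, Set.mem_ofPred_eq, Pi.le_def, Fin.forall_fin_succ, Pi.sub_apply] at hs split
  by_cases 1 ≤ s 8
  · apply split ![0, 0, 0, 0, 0, 0, 0, 0, 1] <;> simp <;> omega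
  · by_cases s 2 + s 3 + s 4 + s 7 + s 8 ≤ a + b + c
    · by_cases 1 ≤ s 1
      · by_cases 1 ≤ s 5
        · apply split ![0, 1, 0, 0, 0, 1, 0, 0, 0] <;> simp <;> omega
        · apply split ![0, 1, 0, 0, 0, 0, 0, 0, 0] <;> simp <;> omega
      · by_cases 1 ≤ s 5
        · apply split ![0, 0, 0, 0, 0, 1, 0, 0, 0] <;> simp <;> omega
        · by_cases s 0 + s 1 + s 2 + s 3 + s 4 + s 6 + s 8 ≤ a + 2 * b + c
          · apply split ![0, 0, 0, 0, 0, 0, 0, 0, 0] <;> simp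
            omega
          · apply split ![1, 0, 0, 0, 0, 0, 0, 0, 0] <;> simp <;> omega
    · apply split ![0, 0, 0, 1, 0, 0, 0, 0, 0] <;> simp <;> omega

/-- A lattice point of weight `λ + ω₃`, where `λ` has no `ω₁` component, splits off one of
weight `ω₃`. -/
theorem SB3_succ_right_subset (b c : ℕ) : SB3 0 b (c + 1) ⊆ SB3 0 0 1 + SB3 0 b c := by
  intro s hs
  have split (t : Fin 9 → ℕ) :=
    mem_add_of_le_of_sub_mem (A := SB3 0 0 1) (B := SB3 0 b c) (s := s) t
  simp only [SB3, Set.mem_ofPred_eq, Pi.le_def, Fin.forall_fin_succ, Pi.sub_apply] at hs split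
  by_cases s 7 ≤ c
  · by_cases s 4 + s 5 + s 6 + s 7 + s 8 ≤ b + c
    · by_cases 1 ≤ s 3
      · apply split ![0, 0, 0, 1, 0, 0, 0, 0, 0] <;> simp <;> omega
      · by_cases s 2 + s 3 + s 4 + s 7 + s 8 ≤ b + c
        · by_cases 1 ≤ s 1
          · apply split ![0, 1, 0, 0, 0, 0, 0, 0, 0] <;> simp <;> omega
          · by_cases s 0 + s 2 + s 3 + s 4 + s 5 + s 6 + s 8 ≤ 2 * b + c
            · apply split ![0, 0, 0, 0, 0, 0, 0, 0, 0] <;> simp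
              omega
            · apply split ![1, 0, 0, 0, 0, 0, 0, 0, 0] <;> simp <;> omega
        · apply split ![0, 0, 1, 0, 0, 0, 0, 0, 0] <;> simp <;> omega
    · apply split ![0, 0, 0, 0, 1, 0, 0, 0, 0] <;> simp <;> omega
  · by_cases s 0 + s 1 + s 2 + s 3 + s 4 + s 5 + s 6 + 2 * s 8 ≤ 2 * b + c
    · apply split ![0, 0, 0, 0, 0, 0, 0, 1, 0] <;> simp <;> omega
    · apply split ![1, 0, 0, 0, 0, 0, 0, 1, 0] <;> simp <;> omega

set_option maxHeartbeats 1000000 in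
/-- A lattice point of weight `(b + 1) ω₂` splits off one of weight `ω₂`. -/
theorem SB3_succ_middle_subset (b : ℕ) : SB3 0 (b + 1) 0 ⊆ SB3 0 1 0 + SB3 0 b 0 := by
  intro s hs
  have split (t : Fin 9 → ℕ) :=
    mem_add_of_le_of_sub_mem (A := SB3 0 1 0) (B := SB3 0 b 0) (s := s) t
  simp only [SB3, Set.mem_ofPred_eq, Pi.le_def, Fin.forall_fin_succ, Pi.sub_apply] at hs split
  by_cases 1 ≤ s 5
  · by_cases 1 ≤ s 2
    · apply split ![0, 0, 1, 0, 0, 1, 0, 0, 0] <;> simp <;> omega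
    · by_cases 1 ≤ s 1
      · apply split ![0, 1, 0, 0, 0, 1, 0, 0, 0] <;> simp <;> omega
      · by_cases s 0 + s 2 + s 3 + s 4 + s 5 + s 6 ≤ 2 * b + 1
        · apply split ![0, 0, 0, 0, 0, 1, 0, 0, 0] <;> simp <;> omega
        · apply split ![1, 0, 0, 0, 0, 1, 0, 0, 0] <;> simp <;> omega
  · by_cases 1 ≤ s 2
    · by_cases s 4 + s 5 + s 6 ≤ b
      · by_cases s 0 + s 1 + s 2 + s 3 + s 4 + s 6 ≤ 2 * b + 1
        · apply split ![0, 0, 1, 0, 0, 0, 0, 0, 0] <;> simp <;> omega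
        · apply split ![1, 0, 1, 0, 0, 0, 0, 0, 0] <;> simp <;> omega
      · apply split ![0, 0, 1, 0, 0, 0, 1, 0, 0] <;> simp <;> omega
    · by_cases 1 ≤ s 1
      · by_cases 1 ≤ s 4
        · apply split ![0, 1, 0, 0, 1, 0, 0, 0, 0] <;> simp <;> omega
        · by_cases 1 ≤ s 6
          · apply split ![0, 1, 0, 0, 0, 0, 1, 0, 0] <;> simp <;> omega
          · by_cases s 0 + s 1 + s 2 + s 3 + s 4 + s 6 ≤ 2 * b + 1
            · apply split ![0, 1, 0, 0, 0, 0, 0, 0, 0] <;> simp <;> omega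
            · apply split ![1, 1, 0, 0, 0, 0, 0, 0, 0] <;> simp <;> omega
      · by_cases 1 ≤ s 4
        · by_cases s 0 + s 1 + s 2 + s 3 + s 4 + s 6 ≤ 2 * b + 1
          · apply split ![0, 0, 0, 0, 1, 0, 0, 0, 0] <;> simp <;> omega
          · apply split ![1, 0, 0, 0, 1, 0, 0, 0, 0] <;> simp <;> omega
        · by_cases s 0 + s 1 + s 2 + s 3 + s 4 + s 6 ≤ 2 * b + 1
          · by_cases s 1 + s 2 + s 3 ≤ b
            · by_cases s 4 + s 5 + s 6 ≤ b
              · by_cases s 0 + s 1 + s 2 + s 3 + s 4 + s 6 ≤ 2 * b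
                · apply split ![0, 0, 0, 0, 0, 0, 0, 0, 0] <;> simp
                  omega
                · apply split ![1, 0, 0, 0, 0, 0, 0, 0, 0] <;> simp <;> omega
              · apply split ![0, 0, 0, 0, 0, 0, 1, 0, 0] <;> simp <;> omega
            · apply split ![0, 0, 0, 1, 0, 0, 0, 0, 0] <;> simp <;> omega
          · by_cases 1 ≤ s 6
            · by_cases s 1 + s 2 + s 3 ≤ b
              · apply split ![1, 0, 0, 0, 0, 0, 1, 0, 0] <;> simp <;> omega
              · apply split ![0, 0, 0, 1, 0, 0, 1, 0, 0] <;> simp <;> omega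
            · by_cases 1 ≤ s 3
              · apply split ![1, 0, 0, 1, 0, 0, 0, 0, 0] <;> simp <;> omega
              · apply split ![2, 0, 0, 0, 0, 0, 0, 0, 0] <;> simp <;> omega

theorem SB3_succ_left (a b c : ℕ) : SB3 (a + 1) b c = SB3 1 0 0 + SB3 a b c :=
  (SB3_succ_left_subset a b c).antisymm <| by
    simpa [add_comm] using SB3_add_subset_s2 1 0 0 a b c

theorem SB3_succ_right (b c : ℕ) : SB3 0 b (c + 1) = SB3 0 0 1 + SB3 0 b c :=
  (SB3_succ_right_subset b c).antisymm <| by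
    simpa [add_comm] using SB3_add_subset_s2 0 0 1 0 b c

theorem SB3_succ_middle (b : ℕ) : SB3 0 (b + 1) 0 = SB3 0 1 0 + SB3 0 b 0 :=
  (SB3_succ_middle_subset b).antisymm <| by
    simpa [add_comm] using SB3_add_subset_s2 0 1 0 0 b 0

/-- `SB3` is additive in the weight. -/
theorem SB3_add_s2 (a b c a' b' c' : ℕ) :
    SB3 (a + a') (b + b') (c + c') = SB3 a b c + SB3 a' b' c' := by
  induction a with
  | succ a ih => rw [Nat.add_right_comm, SB3_succ_left (a + a'), SB3_succ_left a, ih, add_assoc]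
  | zero =>
    induction a' with
    | succ a' ih =>
      rw [← Nat.add_assoc, SB3_succ_left (0 + a'), SB3_succ_left a', ih, add_left_comm]
    | zero =>
      induction c with
      | succ c ih =>
        rw [Nat.add_right_comm, SB3_succ_right _ (c + c'), SB3_succ_right b c, ih, add_assoc]
      | zero =>
        induction c' with
        | succ c' ih =>
          rw [← Nat.add_assoc, SB3_succ_right _ (0 + c'), SB3_succ_right b' c', ih, add_left_comm]
        | zero =>
          induction b with
          | succ b ih =>
            rw [Nat.add_right_comm, SB3_succ_middle (b + b'), SB3_succ_middle b,
              ih, add_assoc]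
          | zero => simp [SB3_zero]

/-- `S(k·λ)` is the `k`-fold Minkowski sum of `S(λ)` with itself;
in particular `P(λ)` is a normal lattice polytope. -/
theorem SB3_normal (m1 m2 m3 k : ℕ) (hk : 1 ≤ k) :
    SB3 (k * m1) (k * m2) (k * m3) = ∑ _j ∈ Finset.range k, SB3 m1 m2 m3 := by
  clear hk
  induction k with
  | zero => simp [SB3_zero]
  | succ k ih =>
    rw [Finset.sum_range_succ, ← ih, ← SB3_add_s2, Nat.succ_mul, Nat.succ_mul, Nat.succ_mul]
end

section
/- Let n >= 2 and i = 1 (so that D consists of exactly the two chains {alpha_{1,1}, alpha_{1,2}, ..., alpha_{1,2n-2}} and {alpha_{1,2}, ..., alpha_{1,2n-1}}, and S(D, m*omega_1) = {s in Z_{>=0}^{2n-1} : s_{alpha_{1,1}}+...+s_{alpha_{1,2n-2}} <= m and s_{alpha_{1,2}}+...+s_{alpha_{1,2n-1}} <= m}). Then for every integer m >= 1, S(D, m*omega_1) = S(D, (m-1)*omega_1) + S(D, omega_1). -/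
open scoped Pointwise

/-- A single step in a Dyck path: `α_{p,q} → α_{p,q+1}` or `α_{p,q} → α_{p+1,q}`. -/
def RootStep (a b : ℕ × ℕ) : Prop :=
  (b.1 = a.1 ∧ b.2 = a.2 + 1) ∨ (b.1 = a.1 + 1 ∧ b.2 = a.2)

/-- `inR n i (p,q)` means that `α_{p,q}` is a positive root of `B_n`
(`1 ≤ p ≤ n`, `p ≤ q ≤ 2n-p`) belonging to `R_i^+`, i.e. `p ≤ i ≤ q`. -/
def inR (n i : ℕ) (a : ℕ × ℕ) : Prop :=
  1 ≤ a.1 ∧ a.1 ≤ i ∧ i ≤ a.2 ∧ a.1 + a.2 ≤ 2 * n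

/-- A type 1 Dyck path for `R_i^+` of `B_n`, recorded as the list of its roots. -/
def IsType1 (n i : ℕ) (L : List (ℕ × ℕ)) : Prop :=
  L ≠ [] ∧ L.Chain' RootStep ∧ (∀ x ∈ L, inR n i x) ∧
    ((L.head? = some (1, i) ∧ L.getLast? = some (i, 2 * n - i - 1)) ∨
     (L.head? = some (1, i + 1) ∧ L.getLast? = some (i, 2 * n - i)))

/-- A type 2 (double) Dyck path for `R_i^+` of `B_n`, recorded as the pair of lists of
roots of its two constituent single paths. -/
def IsType2 (n i : ℕ) (L1 L2 : List (ℕ × ℕ)) : Prop :=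
  ∃ j : ℕ, 1 ≤ j ∧ j < i ∧
    L1 ≠ [] ∧ L2 ≠ [] ∧ L1.Chain' RootStep ∧ L2.Chain' RootStep ∧
    (∀ x ∈ L1, inR n i x) ∧ (∀ x ∈ L2, inR n i x) ∧
    L1.head? = some (1, i) ∧ L2.head? = some (2, i) ∧
    L1.getLast? = some (j, 2 * n - j) ∧ L2.getLast? = some (j + 1, 2 * n - j - 1) ∧
    (∀ x, ¬(x ∈ L1 ∧ x ∈ L2))

/-- The constant `c_i`: `1` if `i = 1` or `i = n`, and `2` if `2 ≤ i ≤ n-1`. -/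
def cB (n i : ℕ) : ℕ := if i = 1 ∨ i = n then 1 else 2

/-- `SD n i m` is the set `S(D, m·ω_i)` of lattice points of the Dyck-path polytope:
multi-exponents `s` supported on `R_i^+` with `∑_{β ∈ p} s_β ≤ m` for every type 1
Dyck path `p` and `∑_{β ∈ p} s_β ≤ m·c_i` for every type 2 Dyck path `p`.
(Elements of a Dyck path are pairwise distinct, so summation over the recording
lists agrees with summation over the underlying set of roots.) -/
def SD (n i m : ℕ) : Set ((ℕ × ℕ) → ℕ) :=
  {s | (∀ β, ¬ inR n i β → s β = 0) ∧
       (∀ L, IsType1 n i L → (L.map s).sum ≤ m) ∧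
       (∀ L1 L2, IsType2 n i L1 L2 → ((L1 ++ L2).map s).sum ≤ m * cB n i)}

/-- A chain of steps inside the row `p = 1` runs through consecutive roots. -/
theorem sum_map_of_isChain_row (s : ℕ × ℕ → ℕ) (b : ℕ) :
    ∀ (L : List (ℕ × ℕ)) (a : ℕ), L.IsChain RootStep → (∀ x ∈ L, x.1 = 1) →
      L.head? = some (1, a) → L.getLast? = some (1, b) →
      a ≤ b ∧ (L.map s).sum = ∑ q ∈ Finset.Icc a b, s (1, q)
  | [], a, _, _, hh, _ => by simp at hh
  | [x], a, _, _, hh, hl => by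
      simp only [List.head?_cons, List.getLast?_singleton, Option.some.injEq] at hh hl
      obtain rfl : a = b := by rw [hh] at hl; simpa using hl
      simp [hh]
  | x :: y :: L, a, hc, hp, hh, hl => by
      simp only [List.head?_cons, Option.some.injEq] at hh
      subst hh
      rw [List.isChain_cons_cons] at hc
      have hy : y = (1, a + 1) := by
        have h1 := hp y (by simp)
        rcases hc.1 with h | h
        · exact Prod.ext h1 h.2
        · simp only at h; omega
      subst hy
      obtain ⟨hab, hs⟩ := sum_map_of_isChain_row s b ((1, a + 1) :: L) (a + 1) hc.2
        (fun x hx => hp x (List.mem_cons_of_mem _ hx)) rfl (by simpa using hl)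
      refine ⟨by omega, ?_⟩
      rw [List.map_cons, List.sum_cons, hs, ← Finset.add_sum_Ioc_eq_sum_Icc (by omega : a ≤ b),
        Finset.Icc_add_one_left_eq_Ioc]

/-- Any two roots of the row `p = 1` are joined by a chain of steps inside that row. -/
theorem exists_isChain_row (k : ℕ) : ∀ a : ℕ, ∃ L : List (ℕ × ℕ), L.IsChain RootStep ∧
    (∀ x ∈ L, x.1 = 1 ∧ a ≤ x.2 ∧ x.2 ≤ a + k) ∧
    L.head? = some (1, a) ∧ L.getLast? = some (1, a + k) := by
  induction k with
  | zero => exact fun a => ⟨[(1, a)], by simp, by simp, rfl, rfl⟩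
  | succ k ih =>
    intro a
    obtain ⟨L, hc, hm, hh, hl⟩ := ih (a + 1)
    obtain ⟨y, L, rfl⟩ : ∃ y L', L = y :: L' := by
      cases L with
      | nil => simp at hh
      | cons y L => exact ⟨y, L, rfl⟩
    simp only [List.head?_cons, Option.some.injEq] at hh
    refine ⟨(1, a) :: y :: L, List.isChain_cons_cons.2 ⟨Or.inl (by simp [hh]), hc⟩, ?_, rfl, ?_⟩
    · intro x hx
      rcases List.mem_cons.1 hx with rfl | hx
      · simp
      · have := hm x hx
        omega
    · rw [List.getLast?_cons_cons, hl]
      simp only [Option.some.injEq, Prod.mk.injEq, true_and]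
      omega

/-- The bound along every type 1 path for `i = 1` amounts to two bounds on interval sums. -/
theorem mem_SD_one_iff (n : ℕ) (hn : 2 ≤ n) (m : ℕ) (s : ℕ × ℕ → ℕ) :
    s ∈ SD n 1 m ↔ (∀ β, ¬ inR n 1 β → s β = 0) ∧
      ∑ q ∈ Finset.Icc 1 (2 * n - 2), s (1, q) ≤ m ∧
      ∑ q ∈ Finset.Icc 2 (2 * n - 1), s (1, q) ≤ m := by
  have hrow : ∀ L : List (ℕ × ℕ), (∀ x ∈ L, inR n 1 x) → ∀ x ∈ L, x.1 = 1 :=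
    fun L h x hx => le_antisymm (h x hx).2.1 (h x hx).1
  have hne : ∀ (L : List (ℕ × ℕ)) (x : ℕ × ℕ), L.head? = some x → L ≠ [] := by
    rintro L x h rfl
    simp at h
  constructor
  · rintro ⟨h0, h1, -⟩
    have key : ∀ a, 1 ≤ a → a ≤ 2 → ∑ q ∈ Finset.Icc a (a + (2 * n - 3)), s (1, q) ≤ m := by
      intro a ha ha2
      obtain ⟨L, hc, hm, hh, hl⟩ := exists_isChain_row (2 * n - 3) a
      rw [← (sum_map_of_isChain_row s _ L a hc (fun x hx => (hm x hx).1) hh hl).2]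
      refine h1 L ⟨hne L _ hh, hc, fun x hx => ?_, ?_⟩
      · have := hm x hx
        unfold inR
        omega
      · rw [hh, hl]
        simp only [Option.some.injEq, Prod.mk.injEq, true_and]
        omega
    refine ⟨h0, ?_, ?_⟩
    · simpa only [show 1 + (2 * n - 3) = 2 * n - 2 by omega] using key 1 le_rfl one_le_two
    · simpa only [show 2 + (2 * n - 3) = 2 * n - 1 by omega] using key 2 one_le_two le_rfl
  · rintro ⟨h0, h1, h2⟩
    refine ⟨h0, ?_, ?_⟩
    · rintro L ⟨-, hc, hR, ⟨hh, hl⟩ | ⟨hh, hl⟩⟩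
      · rw [(sum_map_of_isChain_row s _ L _ hc (hrow L hR) hh hl).2]
        exact h1
      · rw [(sum_map_of_isChain_row s _ L _ hc (hrow L hR) hh hl).2]
        exact h2
    · rintro L1 L2 ⟨j, hj, hj', -⟩
      omega

/-- Membership in `S(D, m·ω₁)` in terms of the two extreme coordinates and the middle sum. -/
theorem mem_SD_one_iff_middle (n : ℕ) (hn : 2 ≤ n) (m : ℕ) (s : ℕ × ℕ → ℕ) :
    s ∈ SD n 1 m ↔ (∀ β, ¬ inR n 1 β → s β = 0) ∧
      s (1, 1) + ∑ q ∈ Finset.Icc 2 (2 * n - 2), s (1, q) ≤ m ∧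
      ∑ q ∈ Finset.Icc 2 (2 * n - 2), s (1, q) + s (1, 2 * n - 1) ≤ m := by
  rw [mem_SD_one_iff n hn, ← Finset.add_sum_Ioc_eq_sum_Icc (by omega : 1 ≤ 2 * n - 2)]
  obtain ⟨k, hk⟩ : ∃ k, 2 * n - 1 = k + 1 := ⟨2 * n - 2, by omega⟩
  have hk' : 2 * n - 2 = k := by omega
  rw [hk, hk', Finset.sum_Icc_succ_top (by omega)]
  rfl

theorem SD_one_add_subset (n : ℕ) (hn : 2 ≤ n) (k l : ℕ) :
    SD n 1 k + SD n 1 l ⊆ SD n 1 (k + l) := by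
  rintro _ ⟨s, hs, t, ht, rfl⟩
  rw [mem_SD_one_iff n hn] at hs ht ⊢
  refine ⟨fun β hβ => by simp [hs.1 β hβ, ht.1 β hβ], ?_, ?_⟩
  · simpa only [Pi.add_apply, Finset.sum_add_distrib] using add_le_add hs.2.1 ht.2.1
  · simpa only [Pi.add_apply, Finset.sum_add_distrib] using add_le_add hs.2.2 ht.2.2

/-- Every point of `S(D, (m+1)·ω₁)` dominates a point of `S(D, ω₁)` whose removal lands in
`S(D, m·ω₁)`. -/
theorem exists_le_sub_mem_SD_one (n : ℕ) (hn : 2 ≤ n) (m : ℕ) (s : ℕ × ℕ → ℕ)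
    (hs : s ∈ SD n 1 (m + 1)) : ∃ t ≤ s, t ∈ SD n 1 1 ∧ s - t ∈ SD n 1 m := by
  simp only [mem_SD_one_iff_middle n hn] at hs ⊢
  obtain ⟨h0, h1, h2⟩ := hs
  have hzero : ∀ t ≤ s, ∀ β, ¬ inR n 1 β → t β = 0 := fun t ht β hβ =>
    Nat.le_zero.1 ((ht β).trans (h0 β hβ).le)
  have hsub : ∀ t, s - t ≤ s := fun t β => Nat.sub_le _ _
  by_cases hc : ∃ r ∈ Finset.Icc 2 (2 * n - 2), s (1, r) ≠ 0
  · obtain ⟨r, hr, hr0⟩ := hc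
    have hr' := Finset.mem_Icc.1 hr
    set t : ℕ × ℕ → ℕ := Pi.single (1, r) 1 with ht
    have hts : t ≤ s := by
      intro β
      rw [ht, Pi.single_apply]
      split_ifs with h
      · rw [h]
        exact Nat.one_le_iff_ne_zero.2 hr0
      · exact Nat.zero_le _
    have hsum : ∑ q ∈ Finset.Icc 2 (2 * n - 2), t (1, q) = 1 := by
      rw [Finset.sum_eq_single_of_mem r hr]
      · simp [ht]
      · intro q _ hq
        simp [ht, hq]
    have ht1 : t (1, 1) = 0 := by
      rw [ht, Pi.single_apply, if_neg]
      simp only [Prod.mk.injEq]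
      omega
    have ht2 : t (1, 2 * n - 1) = 0 := by
      rw [ht, Pi.single_apply, if_neg]
      simp only [Prod.mk.injEq]
      omega
    have hdiff : ∑ q ∈ Finset.Icc 2 (2 * n - 2), (s - t) (1, q) + 1 =
        ∑ q ∈ Finset.Icc 2 (2 * n - 2), s (1, q) := by
      refine (congrArg _ hsum.symm).trans ?_
      rw [← Finset.sum_add_distrib]
      exact Finset.sum_congr rfl fun q _ => Nat.sub_add_cancel (hts (1, q))
    refine ⟨t, hts, ⟨hzero t hts, by omega, by omega⟩, hzero _ (hsub t), ?_, ?_⟩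
    · simp only [Pi.sub_apply] at hdiff ⊢
      omega
    · simp only [Pi.sub_apply] at hdiff ⊢
      omega
  · push Not at hc
    have hmid : ∀ t ≤ s, ∑ q ∈ Finset.Icc 2 (2 * n - 2), t (1, q) = 0 := fun t ht =>
      Finset.sum_eq_zero fun q hq => Nat.le_zero.1 ((ht (1, q)).trans (hc q hq).le)
    have hts : (s ⊓ 1) ≤ s := inf_le_left
    rw [hmid s le_rfl] at h1 h2
    refine ⟨s ⊓ 1, hts, ⟨hzero _ hts, ?_, ?_⟩, hzero _ (hsub _), ?_, ?_⟩
    · rw [hmid _ hts]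
      exact inf_le_right
    · rw [hmid _ hts, zero_add]
      exact inf_le_right
    · rw [hmid _ (hsub _)]
      simp only [Pi.sub_apply, Pi.inf_apply, Pi.one_apply]
      omega
    · rw [hmid _ (hsub _)]
      simp only [Pi.sub_apply, Pi.inf_apply, Pi.one_apply]
      omega

/-- for `i = 1` and any `n ≥ 2`,
`S(D, m·ω₁) = S(D, (m-1)·ω₁) + S(D, ω₁)` for every `m ≥ 1`. -/
theorem SD_omega1_minkowski (n : ℕ) (hn : 2 ≤ n) (m : ℕ) (hm : 1 ≤ m) :
    SD n 1 m = SD n 1 (m - 1) + SD n 1 1 := by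
  obtain ⟨k, rfl⟩ : ∃ k, m = k + 1 := ⟨m - 1, by omega⟩
  rw [Nat.add_sub_cancel]
  refine Set.Subset.antisymm (fun s hs => ?_) (SD_one_add_subset n hn k 1)
  obtain ⟨t, hts, ht, hst⟩ := exists_le_sub_mem_SD_one n hn k s hs
  exact ⟨s - t, hst, t, ht, funext fun β => Nat.sub_add_cancel (hts β)⟩
end

section
/- Let n >= 2 and i = 2. Then for every integer m >= 1, S(D, m*omega_2) = S(D, (m-1)*omega_2) + S(D, omega_2). -/
open scoped Pointwise

/-- The sum of `s` over the roots `α_{p,c}, …, α_{p,d}` of the `p`-th row. -/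
def rowSum (s : ℕ × ℕ → ℕ) (p c d : ℕ) : ℕ := ∑ q ∈ Finset.Icc c d, s (p, q)

lemma rowSum_add (s t : ℕ × ℕ → ℕ) (p c d : ℕ) :
    rowSum (s + t) p c d = rowSum s p c d + rowSum t p c d := by
  simp [rowSum, Finset.sum_add_distrib]

lemma rowSum_single (a b v p c d : ℕ) :
    rowSum (Pi.single (a, b) v) p c d = if p = a ∧ c ≤ b ∧ b ≤ d then v else 0 := by
  unfold rowSum
  by_cases hp : p = a
  · subst hp
    have h (q : ℕ) : (Pi.single (p, b) v : ℕ × ℕ → ℕ) (p, q) = if q = b then v else 0 := by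
      simp [Pi.single_apply]
    simp [h]
  · simp [hp]

lemma rowSum_self (s : ℕ × ℕ → ℕ) (p q : ℕ) : rowSum s p q q = s (p, q) := by
  simp [rowSum]

lemma rowSum_eq_zero (s : ℕ × ℕ → ℕ) (p : ℕ) {c d : ℕ} (h : d < c) : rowSum s p c d = 0 := by
  simp [rowSum, h]

lemma rowSum_split (s : ℕ × ℕ → ℕ) (p : ℕ) {c k d : ℕ} (hck : c ≤ k + 1) (hkd : k ≤ d) :
    rowSum s p c k + rowSum s p (k + 1) d = rowSum s p c d := by
  unfold rowSum
  rw [← Finset.sum_union]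
  · congr 1
    ext q
    simp only [Finset.mem_union, Finset.mem_Icc]
    omega
  · rw [Finset.disjoint_left]
    intro q
    simp only [Finset.mem_Icc]
    omega

lemma rowSum_mono_right (s : ℕ × ℕ → ℕ) (p c : ℕ) {k d : ℕ} (h : k ≤ d) :
    rowSum s p c k ≤ rowSum s p c d :=
  Finset.sum_le_sum_of_subset (Finset.Icc_subset_Icc_right h)

lemma rowSum_mono_left (s : ℕ × ℕ → ℕ) (p d : ℕ) {c k : ℕ} (h : c ≤ k) :
    rowSum s p k d ≤ rowSum s p c d :=
  Finset.sum_le_sum_of_subset (Finset.Icc_subset_Icc_left h)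

lemma rowSum_cons (s : ℕ × ℕ → ℕ) (p : ℕ) {c d : ℕ} (h : c ≤ d) :
    rowSum s p c d = s (p, c) + rowSum s p (c + 1) d := by
  rw [← rowSum_split s p (Nat.le_succ c) h, rowSum_self]

/-- The leftmost nonzero entry of a row segment with positive sum. -/
lemma exists_first_pos (s : ℕ × ℕ → ℕ) (p c d : ℕ) (h : 0 < rowSum s p c d) :
    ∃ q, c ≤ q ∧ q ≤ d ∧ 0 < s (p, q) ∧ ∀ k < q, rowSum s p c k = 0 := by
  classical
  have hex : ∃ q, c ≤ q ∧ q ≤ d ∧ 0 < s (p, q) := by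
    obtain ⟨q, hq, hpos⟩ := Finset.exists_ne_zero_of_sum_ne_zero h.ne'
    rw [Finset.mem_Icc] at hq
    exact ⟨q, hq.1, hq.2, Nat.pos_of_ne_zero hpos⟩
  obtain ⟨h1, h2, h3⟩ := Nat.find_spec hex
  refine ⟨Nat.find hex, h1, h2, h3, fun k hk => Finset.sum_eq_zero fun q hq => ?_⟩
  rw [Finset.mem_Icc] at hq
  have := Nat.find_min hex (lt_of_le_of_lt hq.2 hk)
  by_contra hne
  exact this ⟨hq.1, by omega, Nat.pos_of_ne_zero hne⟩

/-- The rightmost nonzero entry of a row segment with positive sum. -/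
lemma exists_last_pos (s : ℕ × ℕ → ℕ) (p c d : ℕ) (h : 0 < rowSum s p c d) :
    ∃ q, c ≤ q ∧ q ≤ d ∧ 0 < s (p, q) ∧ ∀ k > q, rowSum s p k d = 0 := by
  induction d with
  | zero =>
    have hc : c = 0 := by
      by_contra hc
      rw [rowSum_eq_zero s p (by omega)] at h
      omega
    subst hc
    rw [rowSum_self] at h
    exact ⟨0, le_rfl, le_rfl, h, fun k hk => rowSum_eq_zero s p hk⟩
  | succ d ih =>
    have hc : c ≤ d + 1 := by
      by_contra hc
      rw [rowSum_eq_zero s p (by omega)] at h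
      omega
    by_cases hs : 0 < s (p, d + 1)
    · exact ⟨d + 1, hc, le_rfl, hs, fun k hk => rowSum_eq_zero s p hk⟩
    · have hlast : ∀ k ≤ d + 1, rowSum s p k (d + 1) = rowSum s p k d := fun k hk => by
        rw [← rowSum_split s p hk (Nat.le_succ d), rowSum_self]
        omega
      rw [hlast c hc] at h
      obtain ⟨q, h1, h2, h3, h4⟩ := ih h
      refine ⟨q, h1, by omega, h3, fun k hk => ?_⟩
      by_cases hkd : k ≤ d + 1
      · rw [hlast k hkd, h4 k hk]
      · exact rowSum_eq_zero s p (by omega)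

/-- A path that ends in the row in which it starts runs through a segment of that row. -/
lemma sum_path_row (s : ℕ × ℕ → ℕ) (p d : ℕ) (L : List (ℕ × ℕ)) (c : ℕ)
    (hc : L.IsChain RootStep) (hh : L.head? = some (p, c)) (hl : L.getLast? = some (p, d))
    (hp : ∀ x ∈ L, x.1 ≤ p) : c ≤ d ∧ (L.map s).sum = rowSum s p c d := by
  induction L generalizing c with
  | nil => simp at hh
  | cons x L ih =>
    simp only [List.head?_cons, Option.some.injEq] at hh
    subst hh
    cases L with
    | nil =>
      simp only [List.getLast?_singleton, Option.some.injEq, Prod.mk.injEq, true_and] at hl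
      subst hl
      simp [rowSum_self]
    | cons y L =>
      rw [List.isChain_cons_cons] at hc
      have hy := hp y (by simp)
      obtain ⟨y1, y2⟩ := y
      have hxy := hc.1
      simp only [RootStep] at hxy hy
      obtain ⟨rfl, rfl⟩ : y1 = p ∧ y2 = c + 1 := by omega
      rw [List.getLast?_cons_cons] at hl
      obtain ⟨h1, h2⟩ := ih (c + 1) hc.2 rfl hl fun z hz => hp z (List.mem_cons_of_mem _ hz)
      refine ⟨by omega, ?_⟩
      rw [List.map_cons, List.sum_cons, h2, rowSum_cons s _ (by omega : c ≤ d)]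

/-- A path from the first row to the second one changes rows at a unique column. -/
lemma sum_path_two_rows (s : ℕ × ℕ → ℕ) (d : ℕ) (L : List (ℕ × ℕ)) (c : ℕ)
    (hc : L.IsChain RootStep) (hh : L.head? = some (1, c)) (hl : L.getLast? = some (2, d))
    (hp : ∀ x ∈ L, x.1 ≤ 2) :
    ∃ k, c ≤ k ∧ k ≤ d ∧ (L.map s).sum = rowSum s 1 c k + rowSum s 2 k d := by
  induction L generalizing c with
  | nil => simp at hh
  | cons x L ih =>
    simp only [List.head?_cons, Option.some.injEq] at hh
    subst hh
    cases L with
    | nil => simp at hl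
    | cons y L =>
      rw [List.isChain_cons_cons] at hc
      have hp' : ∀ z ∈ y :: L, z.1 ≤ 2 := fun z hz => hp z (List.mem_cons_of_mem _ hz)
      obtain ⟨y1, y2⟩ := y
      have hxy := hc.1
      simp only [RootStep] at hxy
      rw [List.getLast?_cons_cons] at hl
      rcases hxy with ⟨rfl, rfl⟩ | ⟨rfl, rfl⟩
      · obtain ⟨k, h1, h2, h3⟩ := ih (c + 1) hc.2 rfl hl hp'
        refine ⟨k, by omega, h2, ?_⟩
        rw [List.map_cons, List.sum_cons, h3, rowSum_cons s _ (by omega : c ≤ k)]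
        omega
      · obtain ⟨h1, h2⟩ := sum_path_row s 2 d _ _ hc.2 rfl hl hp'
        refine ⟨_, le_rfl, h1, ?_⟩
        rw [List.map_cons, List.sum_cons, h2, rowSum_self]

lemma exists_path_row (s : ℕ × ℕ → ℕ) (p d c : ℕ) (hcd : c ≤ d) :
    ∃ L : List (ℕ × ℕ), L.IsChain RootStep ∧ L.head? = some (p, c) ∧
      L.getLast? = some (p, d) ∧ (∀ x ∈ L, x.1 = p ∧ c ≤ x.2 ∧ x.2 ≤ d) ∧
      (L.map s).sum = rowSum s p c d := by
  induction hcd using Nat.decreasingInduction with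
  | self => exact ⟨[(p, d)], by simp [rowSum_self]⟩
  | of_succ c hcd ih =>
    obtain ⟨L, h1, h2, h3, h4, h5⟩ := ih
    cases L with
    | nil => simp at h2
    | cons y L =>
      simp only [List.head?_cons, Option.some.injEq] at h2
      subst h2
      refine ⟨(p, c) :: (p, c + 1) :: L, ?_, rfl, ?_, ?_, ?_⟩
      · rw [List.isChain_cons_cons]
        exact ⟨Or.inl ⟨rfl, rfl⟩, h1⟩
      · rw [List.getLast?_cons_cons, h3]
      · intro x hx
        rcases List.mem_cons.1 hx with rfl | hx
        · exact ⟨rfl, le_rfl, hcd.le⟩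
        · have := h4 x hx
          omega
      · rw [List.map_cons, List.sum_cons, h5, rowSum_cons s _ hcd.le]

lemma exists_path_two_rows (s : ℕ × ℕ → ℕ) (c k d : ℕ) (hck : c ≤ k) (hkd : k ≤ d) :
    ∃ L : List (ℕ × ℕ), L.IsChain RootStep ∧ L.head? = some (1, c) ∧
      L.getLast? = some (2, d) ∧
      (∀ x ∈ L, x.1 = 1 ∧ c ≤ x.2 ∧ x.2 ≤ k ∨ x.1 = 2 ∧ k ≤ x.2 ∧ x.2 ≤ d) ∧
      (L.map s).sum = rowSum s 1 c k + rowSum s 2 k d := by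
  obtain ⟨L, h1, h2, h3, h4, sumLeft⟩ := exists_path_row s 1 k c hck
  obtain ⟨L', h1', h2', h3', h4', sumRight⟩ := exists_path_row s 2 d k hkd
  refine ⟨L ++ L', ?_, ?_, ?_, ?_, ?_⟩
  · rw [List.isChain_append]
    refine ⟨h1, h1', fun x hx y hy => ?_⟩
    rw [h3] at hx
    rw [h2'] at hy
    simp only [Option.mem_def, Option.some.injEq] at hx hy
    subst hx hy
    exact Or.inr ⟨rfl, rfl⟩
  · simp [List.head?_append, h2]
  · simp [List.getLast?_append, h3']
  · intro x hx
    exact (List.mem_append.1 hx).imp (h4 x) (h4' x)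
  · rw [List.map_append, List.sum_append, sumLeft, sumRight]

/-- Rows weakly increase along a path. -/
lemma row_le_of_getLast (p d : ℕ) (L : List (ℕ × ℕ)) (hc : L.IsChain RootStep)
    (hl : L.getLast? = some (p, d)) : ∀ x ∈ L, x.1 ≤ p := by
  induction L with
  | nil => simp
  | cons x L ih =>
    cases L with
    | nil =>
      simp only [List.getLast?_singleton, Option.some.injEq] at hl
      simp [hl]
    | cons y L =>
      rw [List.isChain_cons_cons] at hc
      rw [List.getLast?_cons_cons] at hl
      have hy := ih hc.2 hl
      intro z hz
      rcases List.mem_cons.1 hz with rfl | hz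
      · have := hy y (by simp)
        have hxy := hc.1
        unfold RootStep at hxy
        omega
      · exact hy z hz

/-- The inequalities defining `S(D, m·ω₂)` in terms of sums over row segments. -/
lemma mem_SD_two_iff (n : ℕ) (hn : 2 ≤ n) (m : ℕ) (s : ℕ × ℕ → ℕ) :
    s ∈ SD n 2 m ↔ (∀ β, ¬ inR n 2 β → s β = 0) ∧
      (∀ k, 2 ≤ k → k ≤ 2 * n - 3 → rowSum s 1 2 k + rowSum s 2 k (2 * n - 3) ≤ m) ∧
      (∀ k, 3 ≤ k → k ≤ 2 * n - 2 → rowSum s 1 3 k + rowSum s 2 k (2 * n - 2) ≤ m) ∧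
      rowSum s 1 2 (2 * n - 1) + rowSum s 2 2 (2 * n - 2) ≤ m * cB n 2 := by
  constructor
  · rintro ⟨h0, h1, h2⟩
    refine ⟨h0, fun k hk hk' => ?_, fun k hk hk' => ?_, ?_⟩
    · obtain ⟨L, hc, hh, hl, hL, hsum⟩ := exists_path_two_rows s 2 k (2 * n - 3) hk hk'
      rw [← hsum]
      refine h1 L ⟨by rintro rfl; simp at hh, hc, fun x hx => ?_, Or.inl ⟨hh, hl⟩⟩
      have := hL x hx
      unfold inR
      omega
    · obtain ⟨L, hc, hh, hl, hL, hsum⟩ := exists_path_two_rows s 3 k (2 * n - 2) hk hk'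
      rw [← hsum]
      refine h1 L ⟨by rintro rfl; simp at hh, hc, fun x hx => ?_, Or.inr ⟨hh, hl⟩⟩
      have := hL x hx
      unfold inR
      omega
    · obtain ⟨L, hc, hh, hl, hL, hsum⟩ := exists_path_row s 1 (2 * n - 1) 2 (by omega)
      obtain ⟨L', hc', hh', hl', hL', hsum'⟩ := exists_path_row s 2 (2 * n - 2) 2 (by omega)
      rw [← hsum, ← hsum', ← List.sum_append, ← List.map_append]
      refine h2 L L' ⟨1, le_rfl, by omega, by rintro rfl; simp at hh,
        by rintro rfl; simp at hh', hc, hc', fun x hx => ?_, fun x hx => ?_, hh, hh', hl, hl',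
        fun x hx => ?_⟩
      · have := hL x hx
        unfold inR
        omega
      · have := hL' x hx
        unfold inR
        omega
      · have := hL x hx.1
        have := hL' x hx.2
        omega
  · rintro ⟨h0, h1, h2, h3⟩
    refine ⟨h0, ?_, ?_⟩
    · rintro L ⟨-, hc, hR, ⟨hh, hl⟩ | ⟨hh, hl⟩⟩
      · obtain ⟨k, hk, hk', hsum⟩ :=
          sum_path_two_rows s (2 * n - 3) L 2 hc hh hl fun x hx => (hR x hx).2.1
        exact hsum ▸ h1 k hk hk'
      · obtain ⟨k, hk, hk', hsum⟩ :=
          sum_path_two_rows s (2 * n - 2) L 3 hc hh hl fun x hx => (hR x hx).2.1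
        exact hsum ▸ h2 k hk hk'
    · rintro L L' ⟨j, hj, hj', -, -, hc, hc', hR, hR', hh, hh', hl, hl', -⟩
      obtain rfl : j = 1 := by omega
      obtain ⟨-, hsum'⟩ :=
        sum_path_row s 2 (2 * n - 2) L' 2 hc' hh' hl' fun x hx => (hR' x hx).2.1
      have hrow : ∀ x ∈ L, x.1 ≤ 1 := row_le_of_getLast 1 (2 * n - 1) L hc hl
      obtain ⟨-, hsum⟩ := sum_path_row s 1 (2 * n - 1) L 2 hc hh hl hrow
      rw [List.map_append, List.sum_append, hsum, hsum']
      exact h3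

/-- The inequalities of `mem_SD_two_iff` for `n ≥ 3` as conditions on the function `f = rowSum s`,
with the entries that do not lie on every kind of type 1 path split off. -/
structure PathBounds (n m : ℕ) (f : ℕ → ℕ → ℕ → ℕ) : Prop where
  middle : ∀ k, 3 ≤ k → k ≤ 2 * n - 3 →
    f 1 2 2 + f 1 3 k + f 2 k (2 * n - 3) ≤ m ∧
    f 1 3 k + f 2 k (2 * n - 3) + f 2 (2 * n - 2) (2 * n - 2) ≤ m
  ends : f 1 2 2 + f 2 2 2 + f 2 3 (2 * n - 3) ≤ m ∧
    f 1 3 (2 * n - 3) + f 1 (2 * n - 2) (2 * n - 2) + f 2 (2 * n - 2) (2 * n - 2) ≤ m ∧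
    f 1 2 2 + f 2 2 2 + f 1 3 (2 * n - 3) + f 2 3 (2 * n - 3) + f 1 (2 * n - 2) (2 * n - 2) +
      f 2 (2 * n - 2) (2 * n - 2) + f 1 (2 * n - 1) (2 * n - 1) ≤ 2 * m

lemma mem_SD_two_iff_pathBounds (n : ℕ) (hn : 3 ≤ n) (m : ℕ) (s : ℕ × ℕ → ℕ) :
    s ∈ SD n 2 m ↔ (∀ β, ¬ inR n 2 β → s β = 0) ∧ PathBounds n m (rowSum s) := by
  rw [mem_SD_two_iff n (by omega) m s]
  have hcB : cB n 2 = 2 := by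
    unfold cB
    rw [if_neg (by omega)]
  have hl : 2 * n - 2 = (2 * n - 3) + 1 := by omega
  have hl3 : 3 ≤ 2 * n - 3 := by omega
  rw [hcB]
  refine and_congr_right fun _ => ?_
  have a2 : ∀ k, 3 ≤ k → rowSum s 1 2 2 + rowSum s 1 3 k = rowSum s 1 2 k := fun k hk =>
    rowSum_split s 1 (by omega) (by omega)
  have b2 : ∀ k, 3 ≤ k → rowSum s 2 2 2 + rowSum s 2 3 k = rowSum s 2 2 k := fun k hk =>
    rowSum_split s 2 (by omega) (by omega)
  have bl : ∀ k, 2 ≤ k → k ≤ 2 * n - 2 → rowSum s 2 k (2 * n - 3) +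
      rowSum s 2 (2 * n - 2) (2 * n - 2) = rowSum s 2 k (2 * n - 2) := fun k hk hk' => by
    have := rowSum_split s 2 (c := k) (k := 2 * n - 3) (d := 2 * n - 2) (by omega) (by omega)
    rwa [← hl] at this
  have al : rowSum s 1 3 (2 * n - 3) + rowSum s 1 (2 * n - 2) (2 * n - 2) =
      rowSum s 1 3 (2 * n - 2) := by
    have := rowSum_split s 1 (c := 3) (k := 2 * n - 3) (d := 2 * n - 2) (by omega) (by omega)
    rwa [← hl] at this
  have al' : rowSum s 1 3 (2 * n - 2) + rowSum s 1 (2 * n - 1) (2 * n - 1) =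
      rowSum s 1 3 (2 * n - 1) := by
    have := rowSum_split s 1 (c := 3) (k := 2 * n - 2) (d := 2 * n - 1) (by omega) (by omega)
    rwa [show 2 * n - 2 + 1 = 2 * n - 1 by omega] at this
  have hA := a2 (2 * n - 1) (by omega)
  have hB := b2 (2 * n - 3) hl3
  have hB' := bl 2 le_rfl (by omega)
  constructor
  · rintro ⟨h1, h2, h3⟩
    refine ⟨fun k hk hk' => ⟨?_, ?_⟩, ?_, ?_, ?_⟩
    · have := h1 k (by omega) hk'
      have := a2 k hk
      omega
    · have := h2 k hk (by omega)
      have := bl k (by omega) (by omega)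
      omega
    · have := h1 2 le_rfl (by omega)
      omega
    · have := h2 (2 * n - 2) (by omega) le_rfl
      omega
    · omega
  · rintro ⟨h1, h3, h4, h5⟩
    refine ⟨fun k hk hk' => ?_, fun k hk hk' => ?_, by omega⟩
    · rcases Nat.lt_or_ge 2 k with hk2 | hk2
      · have := (h1 k hk2 hk').1
        have := a2 k hk2
        omega
      · obtain rfl : k = 2 := by omega
        omega
    · rcases Nat.lt_or_ge k (2 * n - 2) with hk2 | hk2
      · have := (h1 k hk (by omega)).2
        have := bl k (by omega) (by omega)
        omega
      · obtain rfl : k = 2 * n - 2 := by omega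
        omega

lemma add_subset_SD (n i m m' : ℕ) : SD n i m + SD n i m' ⊆ SD n i (m + m') := by
  rintro _ ⟨s, ⟨h0, h1, h2⟩, t, ⟨h0', h1', doubleBound⟩, rfl⟩
  have hsum (L : List (ℕ × ℕ)) : (L.map (s + t)).sum = (L.map s).sum + (L.map t).sum := by
    rw [← List.sum_map_add]
    rfl
  refine ⟨fun β hβ => ?_, fun L hL => ?_, fun L K hL => ?_⟩
  · simp [h0 β hβ, h0' β hβ]
  · simpa only [hsum] using Nat.add_le_add (h1 L hL) (h1' L hL)
  · simpa only [hsum, add_mul] using Nat.add_le_add (h2 L K hL) (doubleBound L K hL)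

/-- Two distinct coordinates can be split off from `s` up to their values. -/
lemma exists_add_singles (s : ℕ × ℕ → ℕ) (a b a' b' v v' : ℕ) (hne : a ≠ a' ∨ b ≠ b')
    (hv : v ≤ s (a, b)) (hv' : v' ≤ s (a', b')) :
    ∃ r t : ℕ × ℕ → ℕ, s = r + t ∧
      (∀ p c d, rowSum t p c d = (if p = a ∧ c ≤ b ∧ b ≤ d then v else 0) +
        if p = a' ∧ c ≤ b' ∧ b' ≤ d then v' else 0) := by
  refine ⟨s - (Pi.single (a, b) v + Pi.single (a', b') v'),
    Pi.single (a, b) v + Pi.single (a', b') v', ?_, fun p c d => ?_⟩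
  · funext β
    refine (Nat.sub_add_cancel ?_).symm
    simp only [Pi.add_apply, Pi.single_apply]
    split_ifs with h h' h'
    · rw [h, Prod.mk.injEq] at h'
      omega
    · rw [h]
      omega
    · rw [h']
      omega
    · omega
  · rw [rowSum_add, rowSum_single, rowSum_single]

/-- Criterion for splitting an element of `S(D, ω₂)` supported on two roots off from `s`. -/
lemma mem_add_of_singles (n : ℕ) (hn : 3 ≤ n) (m : ℕ) (s : ℕ × ℕ → ℕ)
    (h0 : ∀ β, ¬ inR n 2 β → s β = 0) (a b a' b' v v' : ℕ) (hne : a ≠ a' ∨ b ≠ b')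
    (hv : v ≤ s (a, b)) (hv' : v' ≤ s (a', b'))
    (h : ∀ e : ℕ → ℕ → ℕ → ℕ,
      (∀ p c d, e p c d = (if p = a ∧ c ≤ b ∧ b ≤ d then v else 0) +
        if p = a' ∧ c ≤ b' ∧ b' ≤ d then v' else 0) →
      PathBounds n m (fun p c d => rowSum s p c d - e p c d) ∧ PathBounds n 1 e) :
    s ∈ SD n 2 m + SD n 2 1 := by
  obtain ⟨r, t, rfl, ht⟩ := exists_add_singles s a b a' b' v v' hne hv hv'
  obtain ⟨hr1, ht1⟩ := h (rowSum t) ht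
  simp only [rowSum_add, Nat.add_sub_cancel] at hr1
  refine Set.add_mem_add ((mem_SD_two_iff_pathBounds n hn m r).2 ⟨fun β hβ => ?_, hr1⟩)
    ((mem_SD_two_iff_pathBounds n hn 1 t).2 ⟨fun β hβ => ?_, ht1⟩)
  all_goals
    have := h0 β hβ
    simp only [Pi.add_apply] at this
    omega

set_option linter.unusedSimpArgs false

/-- Splitting off `α_{1,2}`. -/
lemma mem_add_of_first_pos (n : ℕ) (hn : 3 ≤ n) (m : ℕ) (s : ℕ × ℕ → ℕ)
    (h0 : ∀ β, ¬ inR n 2 β → s β = 0) (h : PathBounds n (m + 1) (rowSum s))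
    (hx : 0 < s (1, 2)) : s ∈ SD n 2 m + SD n 2 1 := by
  obtain ⟨hmid, hends⟩ := h
  have ex := rowSum_self s 1 2
  have ey := rowSum_self s 2 2
  have ez := rowSum_self s 1 (2 * n - 2)
  have ew := rowSum_self s 2 (2 * n - 2)
  have eu := rowSum_self s 1 (2 * n - 1)
  have hmid3 := hmid 3 le_rfl (by omega)
  have hmidl := hmid (2 * n - 3) (by omega) le_rfl
  by_cases hw : 0 < s (2, 2 * n - 2)
  · refine mem_add_of_singles n hn m s h0 1 2 2 (2 * n - 2) 1 1 (by omega) (by omega) (by omega)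
      fun e he => ⟨⟨fun k hk hk' => ?_, ?_⟩, ⟨fun k hk hk' => ?_, ?_⟩⟩
    all_goals simp only [he]
    all_goals simp (disch := omega) only [le_refl, true_and, and_true, if_true, if_pos, if_neg]
    · have := hmid k hk hk'
      omega
    all_goals omega
  by_cases hz : 0 < s (1, 2 * n - 2)
  · refine mem_add_of_singles n hn m s h0 1 2 1 (2 * n - 2) 1 1 (by omega) (by omega) (by omega)
      fun e he => ⟨⟨fun k hk hk' => ?_, ?_⟩, ⟨fun k hk hk' => ?_, ?_⟩⟩
    all_goals simp only [he]
    all_goals simp (disch := omega) only [le_refl, true_and, and_true, if_true, if_pos, if_neg]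
    · have := hmid k hk hk'
      omega
    all_goals omega
  · refine mem_add_of_singles n hn m s h0 1 2 1 (2 * n - 1) 1 (min 1 (s (1, 2 * n - 1)))
      (by omega) (by omega) (by omega)
      fun e he => ⟨⟨fun k hk hk' => ?_, ?_⟩, ⟨fun k hk hk' => ?_, ?_⟩⟩
    all_goals simp only [he]
    all_goals simp (disch := omega) only [le_refl, true_and, and_true, if_true, if_pos, if_neg]
    · have := hmid k hk hk'
      omega
    all_goals omega

/-- Splitting off `α_{2,2n-2}`. -/
lemma mem_add_of_last_pos (n : ℕ) (hn : 3 ≤ n) (m : ℕ) (s : ℕ × ℕ → ℕ)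
    (h0 : ∀ β, ¬ inR n 2 β → s β = 0) (h : PathBounds n (m + 1) (rowSum s))
    (hx : s (1, 2) = 0) (hw : 0 < s (2, 2 * n - 2)) : s ∈ SD n 2 m + SD n 2 1 := by
  obtain ⟨hmid, hends⟩ := h
  have ex := rowSum_self s 1 2
  have ey := rowSum_self s 2 2
  have ez := rowSum_self s 1 (2 * n - 2)
  have ew := rowSum_self s 2 (2 * n - 2)
  have eu := rowSum_self s 1 (2 * n - 1)
  have hmid3 := hmid 3 le_rfl (by omega)
  have hmidl := hmid (2 * n - 3) (by omega) le_rfl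
  by_cases hy : 0 < s (2, 2)
  · refine mem_add_of_singles n hn m s h0 2 2 2 (2 * n - 2) 1 1 (by omega) (by omega) (by omega)
      fun e he => ⟨⟨fun k hk hk' => ?_, ?_⟩, ⟨fun k hk hk' => ?_, ?_⟩⟩
    all_goals simp only [he]
    all_goals simp (disch := omega) only [le_refl, true_and, and_true, if_true, if_pos, if_neg]
    · have := hmid k hk hk'
      omega
    all_goals omega
  · refine mem_add_of_singles n hn m s h0 2 (2 * n - 2) 1 (2 * n - 1) 1 (min 1 (s (1, 2 * n - 1)))
      (by omega) (by omega) (by omega)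
      fun e he => ⟨⟨fun k hk hk' => ?_, ?_⟩, ⟨fun k hk hk' => ?_, ?_⟩⟩
    all_goals simp only [he]
    all_goals simp (disch := omega) only [le_refl, true_and, and_true, if_true, if_pos, if_neg]
    · have := hmid k hk hk'
      omega
    all_goals omega

/-- Splitting off `α_{2,2}`. -/
lemma mem_add_of_corner_left_pos (n : ℕ) (hn : 3 ≤ n) (m : ℕ) (s : ℕ × ℕ → ℕ)
    (h0 : ∀ β, ¬ inR n 2 β → s β = 0) (h : PathBounds n (m + 1) (rowSum s))
    (hx : s (1, 2) = 0) (hw : s (2, 2 * n - 2) = 0) (hy : 0 < s (2, 2)) :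
    s ∈ SD n 2 m + SD n 2 1 := by
  obtain ⟨hmid, hends⟩ := h
  have ex := rowSum_self s 1 2
  have ey := rowSum_self s 2 2
  have ez := rowSum_self s 1 (2 * n - 2)
  have ew := rowSum_self s 2 (2 * n - 2)
  have eu := rowSum_self s 1 (2 * n - 1)
  by_cases hA : 0 < rowSum s 1 3 (2 * n - 3)
  · obtain ⟨q, hq, hq', hpos, hzero⟩ := exists_first_pos s 1 3 (2 * n - 3) hA
    refine mem_add_of_singles n hn m s h0 2 2 1 q 1 1 (by omega) (by omega) (by omega)
      fun e he => ⟨⟨fun k hk hk' => ?_, ?_⟩, ⟨fun k hk hk' => ?_, ?_⟩⟩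
    all_goals simp only [he]
    · have := hmid k hk hk'
      have := rowSum_mono_left s 2 (2 * n - 3) hk
      have := hzero k
      rcases lt_or_ge k q with hkq | hkq
      all_goals
        simp (disch := omega) only [le_refl, true_and, and_true, if_true, if_pos, if_neg]
        omega
    · simp (disch := omega) only [le_refl, true_and, and_true, if_true, if_pos, if_neg]
      omega
    · rcases lt_or_ge k q with hkq | hkq
      all_goals
        simp (disch := omega) only [le_refl, true_and, and_true, if_true, if_pos, if_neg] <;>
          omega
    · simp (disch := omega) only [le_refl, true_and, and_true, if_true, if_pos, if_neg]
  by_cases hz : 0 < s (1, 2 * n - 2)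
  · refine mem_add_of_singles n hn m s h0 2 2 1 (2 * n - 2) 1 1 (by omega) (by omega) (by omega)
      fun e he => ⟨⟨fun k hk hk' => ?_, ?_⟩, ⟨fun k hk hk' => ?_, ?_⟩⟩
    all_goals simp only [he]
    all_goals simp (disch := omega) only [le_refl, true_and, and_true, if_true, if_pos, if_neg]
    · have := hmid k hk hk'
      have := rowSum_mono_right s 1 3 hk'
      have := rowSum_mono_left s 2 (2 * n - 3) hk
      omega
    all_goals omega
  · refine mem_add_of_singles n hn m s h0 2 2 1 (2 * n - 1) 1 (min 1 (s (1, 2 * n - 1)))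
      (by omega) (by omega) (by omega)
      fun e he => ⟨⟨fun k hk hk' => ?_, ?_⟩, ⟨fun k hk hk' => ?_, ?_⟩⟩
    all_goals simp only [he]
    all_goals simp (disch := omega) only [le_refl, true_and, and_true, if_true, if_pos, if_neg]
    · have := hmid k hk hk'
      have := rowSum_mono_right s 1 3 hk'
      have := rowSum_mono_left s 2 (2 * n - 3) hk
      omega
    all_goals omega

/-- Splitting off `α_{1,2n-2}`. -/
lemma mem_add_of_corner_right_pos (n : ℕ) (hn : 3 ≤ n) (m : ℕ) (s : ℕ × ℕ → ℕ)
    (h0 : ∀ β, ¬ inR n 2 β → s β = 0) (h : PathBounds n (m + 1) (rowSum s))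
    (hx : s (1, 2) = 0) (hw : s (2, 2 * n - 2) = 0) (hy : s (2, 2) = 0)
    (hz : 0 < s (1, 2 * n - 2)) : s ∈ SD n 2 m + SD n 2 1 := by
  obtain ⟨hmid, hends⟩ := h
  have ex := rowSum_self s 1 2
  have ey := rowSum_self s 2 2
  have ez := rowSum_self s 1 (2 * n - 2)
  have ew := rowSum_self s 2 (2 * n - 2)
  have eu := rowSum_self s 1 (2 * n - 1)
  by_cases hB : 0 < rowSum s 2 3 (2 * n - 3)
  · obtain ⟨q, hq, hq', hpos, hzero⟩ := exists_last_pos s 2 3 (2 * n - 3) hB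
    refine mem_add_of_singles n hn m s h0 1 (2 * n - 2) 2 q 1 1 (by omega) (by omega) (by omega)
      fun e he => ⟨⟨fun k hk hk' => ?_, ?_⟩, ⟨fun k hk hk' => ?_, ?_⟩⟩
    all_goals simp only [he]
    · have := hmid k hk hk'
      have := rowSum_mono_right s 1 3 hk'
      have := hzero k
      rcases lt_or_ge q k with hkq | hkq
      all_goals
        simp (disch := omega) only [le_refl, true_and, and_true, if_true, if_pos, if_neg]
        omega
    · simp (disch := omega) only [le_refl, true_and, and_true, if_true, if_pos, if_neg]
      omega
    · rcases lt_or_ge q k with hkq | hkq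
      all_goals
        simp (disch := omega) only [le_refl, true_and, and_true, if_true, if_pos, if_neg] <;>
          omega
    · simp (disch := omega) only [le_refl, true_and, and_true, if_true, if_pos, if_neg]
  · refine mem_add_of_singles n hn m s h0 1 (2 * n - 2) 1 (2 * n - 1) 1 (min 1 (s (1, 2 * n - 1)))
      (by omega) (by omega) (by omega)
      fun e he => ⟨⟨fun k hk hk' => ?_, ?_⟩, ⟨fun k hk hk' => ?_, ?_⟩⟩
    all_goals simp only [he]
    all_goals simp (disch := omega) only [le_refl, true_and, and_true, if_true, if_pos, if_neg]
    · have := hmid k hk hk'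
      have := rowSum_mono_right s 1 3 hk'
      have := rowSum_mono_left s 2 (2 * n - 3) hk
      omega
    all_goals omega

/-- Splitting off the minimal roots of the support. -/
lemma mem_add_of_middle (n : ℕ) (hn : 3 ≤ n) (m : ℕ) (s : ℕ × ℕ → ℕ)
    (h0 : ∀ β, ¬ inR n 2 β → s β = 0) (h : PathBounds n (m + 1) (rowSum s))
    (hx : s (1, 2) = 0) (hw : s (2, 2 * n - 2) = 0) (hy : s (2, 2) = 0)
    (hz : s (1, 2 * n - 2) = 0) : s ∈ SD n 2 m + SD n 2 1 := by
  obtain ⟨hmid, hends⟩ := h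
  have ex := rowSum_self s 1 2
  have ey := rowSum_self s 2 2
  have ez := rowSum_self s 1 (2 * n - 2)
  have ew := rowSum_self s 2 (2 * n - 2)
  have eu := rowSum_self s 1 (2 * n - 1)
  have hmid3 := hmid 3 le_rfl (by omega)
  have hmidl := hmid (2 * n - 3) (by omega) le_rfl
  by_cases hA : 0 < rowSum s 1 3 (2 * n - 3)
  · obtain ⟨p, hp, hp', hpos, hzero⟩ := exists_first_pos s 1 3 (2 * n - 3) hA
    by_cases hB : 0 < rowSum s 2 3 (p - 1)
    · obtain ⟨q, hq, hq', hpos', -⟩ := exists_first_pos s 2 3 (p - 1) hB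
      have hq1 := rowSum_cons s 2 (by omega : q ≤ 2 * n - 3)
      have hq2 := rowSum_mono_left s 2 (2 * n - 3) hq
      refine mem_add_of_singles n hn m s h0 1 p 2 q 1 1 (by omega) (by omega) (by omega)
        fun e he => ⟨⟨fun k hk hk' => ?_, ?_⟩, ⟨fun k hk hk' => ?_, ?_⟩⟩
      all_goals simp only [he]
      · have := hmid k hk hk'
        have := rowSum_mono_left s 2 (2 * n - 3) (c := q + 1) (k := k)
        have := hzero k
        rcases lt_or_ge k p with hkp | hkp <;> rcases lt_or_ge q k with hkq | hkq
        all_goals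
          simp (disch := omega) only [le_refl, true_and, and_true, if_true, if_pos, if_neg]
          omega
      · simp (disch := omega) only [le_refl, true_and, and_true, if_true, if_pos, if_neg]
        omega
      · rcases lt_or_ge k p with hkp | hkp <;> rcases lt_or_ge q k with hkq | hkq
        all_goals
          simp (disch := omega) only [le_refl, true_and, and_true, if_true, if_pos, if_neg] <;>
            omega
      · simp (disch := omega) only [le_refl, true_and, and_true, if_true, if_pos, if_neg]
    · have hp1 := rowSum_split s 1 (c := 3) (k := p - 1) (d := p) (by omega) (by omega)
      have hp2 := rowSum_split s 2 (c := 3) (k := p - 1) (d := 2 * n - 3) (by omega) (by omega)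
      rw [show p - 1 + 1 = p by omega] at hp1 hp2
      rw [rowSum_self] at hp1
      have hmidp := hmid p hp hp'
      refine mem_add_of_singles n hn m s h0 1 p 1 (2 * n - 1) 1 (min 1 (s (1, 2 * n - 1)))
        (by omega) (by omega) (by omega)
        fun e he => ⟨⟨fun k hk hk' => ?_, ?_⟩, ⟨fun k hk hk' => ?_, ?_⟩⟩
      all_goals simp only [he]
      · have := hmid k hk hk'
        have := rowSum_mono_left s 2 (2 * n - 3) hk
        have := hzero k
        rcases lt_or_ge k p with hkp | hkp
        all_goals
          simp (disch := omega) only [le_refl, true_and, and_true, if_true, if_pos, if_neg]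
          omega
      · simp (disch := omega) only [le_refl, true_and, and_true, if_true, if_pos, if_neg]
        omega
      · rcases lt_or_ge k p with hkp | hkp
        all_goals
          simp (disch := omega) only [le_refl, true_and, and_true, if_true, if_pos, if_neg] <;>
            omega
      · simp (disch := omega) only [le_refl, true_and, and_true, if_true, if_pos, if_neg]
        omega
  by_cases hB : 0 < rowSum s 2 3 (2 * n - 3)
  · obtain ⟨q, hq, hq', hpos', -⟩ := exists_first_pos s 2 3 (2 * n - 3) hB
    have hq1 := rowSum_cons s 2 (by omega : q ≤ 2 * n - 3)
    have hq2 := rowSum_mono_left s 2 (2 * n - 3) hq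
    refine mem_add_of_singles n hn m s h0 2 q 1 (2 * n - 1) 1 (min 1 (s (1, 2 * n - 1)))
      (by omega) (by omega) (by omega)
      fun e he => ⟨⟨fun k hk hk' => ?_, ?_⟩, ⟨fun k hk hk' => ?_, ?_⟩⟩
    all_goals simp only [he]
    · have := hmid k hk hk'
      have := rowSum_mono_right s 1 3 hk'
      have := rowSum_mono_left s 2 (2 * n - 3) (c := q + 1) (k := k)
      rcases lt_or_ge q k with hkq | hkq
      all_goals
        simp (disch := omega) only [le_refl, true_and, and_true, if_true, if_pos, if_neg]
        omega
    · simp (disch := omega) only [le_refl, true_and, and_true, if_true, if_pos, if_neg]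
      omega
    · rcases lt_or_ge q k with hkq | hkq
      all_goals
        simp (disch := omega) only [le_refl, true_and, and_true, if_true, if_pos, if_neg] <;>
          omega
    · simp (disch := omega) only [le_refl, true_and, and_true, if_true, if_pos, if_neg]
      omega
  · refine mem_add_of_singles n hn m s h0 1 (2 * n - 1) 1 2 (min 2 (s (1, 2 * n - 1))) 0
      (by omega) (by omega) (by omega)
      fun e he => ⟨⟨fun k hk hk' => ?_, ?_⟩, ⟨fun k hk hk' => ?_, ?_⟩⟩
    all_goals simp only [he]
    all_goals simp (disch := omega) only [le_refl, true_and, and_true, if_true, if_pos, if_neg]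
    · have := hmid k hk hk'
      have := rowSum_mono_right s 1 3 hk'
      have := rowSum_mono_left s 2 (2 * n - 3) hk
      omega
    all_goals omega

lemma SD_two_two_subset_add (m : ℕ) : SD 2 2 (m + 1) ⊆ SD 2 2 m + SD 2 2 1 := by
  intro s hs
  have hmem (m : ℕ) (f : ℕ × ℕ → ℕ) : f ∈ SD 2 2 m ↔ (∀ β, ¬ inR 2 2 β → f β = 0) ∧
      rowSum f 1 2 3 + rowSum f 2 2 2 ≤ m := by
    rw [mem_SD_two_iff 2 le_rfl]
    refine and_congr_right fun _ => ⟨fun h => ?_, fun h => ⟨?_, ?_, ?_⟩⟩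
    · simpa [cB] using h.2.2
    · intro k hk hk'
      omega
    · intro k hk hk'
      omega
    · simpa [cB] using h
  rw [hmem] at hs
  obtain ⟨h0, h⟩ := hs
  obtain ⟨a, b, v, hv, hvs, hR, hone⟩ : ∃ a b v, v ≤ 1 ∧ v ≤ s (a, b) ∧
      (v = 1 → a = 1 ∧ 2 ≤ b ∧ b ≤ 3 ∨ a = 2 ∧ b = 2) ∧
      (v = 0 → rowSum s 1 2 3 + rowSum s 2 2 2 = 0) := by
    by_cases h1 : 0 < rowSum s 1 2 3
    · obtain ⟨q, hq, hq', hpos, -⟩ := exists_first_pos s 1 2 3 h1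
      exact ⟨1, q, 1, le_rfl, hpos, by omega, by omega⟩
    by_cases h2 : 0 < rowSum s 2 2 2
    · refine ⟨2, 2, 1, le_rfl, ?_, by omega, by omega⟩
      rwa [rowSum_self] at h2
    · exact ⟨1, 2, 0, by omega, by omega, by omega, by omega⟩
  obtain ⟨r, t, rfl, ht⟩ := exists_add_singles s a b 0 (b + 1) v 0 (by omega) hvs (Nat.zero_le _)
  simp only [rowSum_add] at h hone
  have ht' : rowSum t 1 2 3 + rowSum t 2 2 2 = v := by
    simp only [ht]
    rcases Nat.le_one_iff_eq_zero_or_eq_one.1 hv with rfl | rfl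
    · simp
    · rcases hR rfl with h | h
      all_goals
        simp (disch := omega) only [le_refl, true_and, and_true, if_true, if_pos, if_neg]
  refine Set.add_mem_add ((hmem m r).2 ⟨fun β hβ => ?_, by omega⟩)
    ((hmem 1 t).2 ⟨fun β hβ => ?_, by omega⟩)
  all_goals
    have := h0 β hβ
    simp only [Pi.add_apply] at this
    omega

/-- for `i = 2` and any `n ≥ 2`,
`S(D, m·ω₂) = S(D, (m-1)·ω₂) + S(D, ω₂)` for every `m ≥ 1`. -/
theorem SD_omega2_minkowski (n : ℕ) (hn : 2 ≤ n) (m : ℕ) (hm : 1 ≤ m) :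
    SD n 2 m = SD n 2 (m - 1) + SD n 2 1 := by
  obtain ⟨m, rfl⟩ := Nat.exists_eq_add_of_le' hm
  rw [Nat.add_sub_cancel]
  refine Set.Subset.antisymm ?_ (add_subset_SD n 2 m 1)
  obtain rfl | hn3 := hn.eq_or_lt
  · exact SD_two_two_subset_add m
  intro s hs
  obtain ⟨h0, h⟩ := (mem_SD_two_iff_pathBounds n hn3 (m + 1) s).1 hs
  rcases Nat.eq_zero_or_pos (s (1, 2)) with hx | hx
  swap
  · exact mem_add_of_first_pos n hn3 m s h0 h hx
  rcases Nat.eq_zero_or_pos (s (2, 2 * n - 2)) with hw | hw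
  swap
  · exact mem_add_of_last_pos n hn3 m s h0 h hx hw
  rcases Nat.eq_zero_or_pos (s (2, 2)) with hy | hy
  swap
  · exact mem_add_of_corner_left_pos n hn3 m s h0 h hx hw hy
  rcases Nat.eq_zero_or_pos (s (1, 2 * n - 2)) with hz | hz
  · exact mem_add_of_middle n hn3 m s h0 h hx hw hy hz
  · exact mem_add_of_corner_right_pos n hn3 m s h0 h hx hw hy hz
end
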